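/- arXiv:2605.04513 — 4 statements merged into one kernel-verified Lean document; each statement's English description precedes it below -/
import Mathlib

section
/- The following two statements (each quantified over all finite groups) are equivalent. (i) Conjecture 2.1: for every finite group G such that G/Z(G) has a normal subgroup S̄ which is nonabelian simple and has trivial centralizer in G/Z(G), every faithful irreducible complex character χ of G whose restriction to G^(∞) is irreducible, and every g ∈ G with χ(g) ≠ 0 and G = ⟨G^(∞), Z(G), g⟩, one has o(gZ(G))·χ(1) ∣ |G : Z(G)|. (ii) Conjecture 2.4: for every finite group H whose derived subgroup L = [H,H] is quasi-simple with Z(L) = Z(H), every faithful irreducible complex character χ of H, and every h ∈ H with χ(h) ≠ 0 and H = ⟨L, h⟩, one has o(hZ(H))·χ(1) ∣ |H : Z(H)|. -/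
/-- The solvable residual `G^(∞)` of a group `G`: for finite `G` this is the stable term
of the derived series, here realised as the intersection of all terms of the derived
series. -/
def solvableResidual (G : Type*) [Group G] : Subgroup G :=
  ⨅ n : ℕ, derivedSeries G n

/-- A group `L` is quasi-simple if it is perfect and `L/Z(L)` is simple. -/
def IsQuasisimple (L : Type*) [Group L] : Prop :=
  commutator L = ⊤ ∧ IsSimpleGroup (L ⧸ Subgroup.center L)

/-- **Conjecture 2.1.** For every finite group `G` such that `G/Z(G)` has a normal
subgroup `S̄` which is nonabelian simple and has trivial centralizer in `G/Z(G)`, every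
faithful irreducible complex character `χ` of `G` whose restriction to `G^(∞)` is
irreducible, and every `g ∈ G` with `χ(g) ≠ 0` and `G = ⟨G^(∞), Z(G), g⟩`, one has
`o(gZ(G))·χ(1) ∣ |G : Z(G)|`. -/
def Conjecture21 : Prop :=
  ∀ (G : Type) [Group G] [Finite G],
    (∃ S : Subgroup (G ⧸ Subgroup.center G), S.Normal ∧ IsSimpleGroup ↥S ∧
      (∃ a b : ↥S, a * b ≠ b * a) ∧
      Subgroup.centralizer (S : Set (G ⧸ Subgroup.center G)) = ⊥) →
    ∀ (V : FDRep ℂ G), CategoryTheory.Simple V → Function.Injective V.ρ →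
      CategoryTheory.Simple (FDRep.of (V.ρ.comp (solvableResidual G).subtype)) →
      ∀ g : G, V.character g ≠ 0 →
        solvableResidual G ⊔ Subgroup.center G ⊔ Subgroup.zpowers g = ⊤ →
        orderOf (QuotientGroup.mk g : G ⧸ Subgroup.center G) * Module.finrank ℂ V ∣
          (Subgroup.center G).index

/-- **Conjecture 2.4.** For every finite group `H` whose derived subgroup `L = [H,H]` is
quasi-simple with `Z(L) = Z(H)`, every faithful irreducible complex character `χ` of `H`,
and every `h ∈ H` with `χ(h) ≠ 0` and `H = ⟨L, h⟩`, one has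
`o(hZ(H))·χ(1) ∣ |H : Z(H)|`. -/
def Conjecture24 : Prop :=
  ∀ (H : Type) [Group H] [Finite H],
    IsQuasisimple ↥(commutator H) →
    Subgroup.map (commutator H).subtype (Subgroup.center ↥(commutator H)) =
      Subgroup.center H →
    ∀ (V : FDRep ℂ H), CategoryTheory.Simple V → Function.Injective V.ρ →
      ∀ h : H, V.character h ≠ 0 → commutator H ⊔ Subgroup.zpowers h = ⊤ →
        orderOf (QuotientGroup.mk h : H ⧸ Subgroup.center H) * Module.finrank ℂ V ∣
          (Subgroup.center H).index

open scoped Pointwise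

structure PR {P V : Type} [Group P] [AddCommGroup V] [Module ℂ V]
    (ρ : P → Module.End ℂ V) : Prop where
  one : ∃ c : ℂ, c ≠ 0 ∧ ρ 1 = c • (1 : Module.End ℂ V)
  mul : ∀ x y, ∃ c : ℂ, c ≠ 0 ∧ ρ x * ρ y = c • ρ (x * y)

def Irr {X V : Type} [AddCommGroup V] [Module ℂ V] (ρ : X → Module.End ℂ V) : Prop :=
  Nontrivial V ∧ ∀ W : Submodule ℂ V, (∀ x, ∀ w ∈ W, ρ x w ∈ W) → W = ⊥ ∨ W = ⊤

def Scal {V : Type} [AddCommGroup V] [Module ℂ V] (a : Module.End ℂ V) : Prop :=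
  ∃ c : ℂ, a = c • (1 : Module.End ℂ V)

section basics
variable {P V : Type} [Group P] [AddCommGroup V] [Module ℂ V] {ρ : P → Module.End ℂ V}

theorem PR.inv (h : PR ρ) (x : P) : ∃ c : ℂ, c ≠ 0 ∧ ρ x * ρ x⁻¹ = c • (1 : Module.End ℂ V) := by
  obtain ⟨c, hc, e⟩ := h.mul x x⁻¹
  obtain ⟨d, hd, e'⟩ := h.one
  refine ⟨c * d, mul_ne_zero hc hd, ?_⟩
  rw [e, mul_inv_cancel, e', smul_smul]

theorem PR.isUnit (h : PR ρ) (x : P) : IsUnit (ρ x) := by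
  obtain ⟨c, hc, e⟩ := h.inv x
  obtain ⟨d, hd, e'⟩ := h.inv x⁻¹
  rw [inv_inv] at e'
  rw [isUnit_iff_exists_and_exists]
  refine ⟨⟨c⁻¹ • ρ x⁻¹, ?_⟩, ⟨d⁻¹ • ρ x⁻¹, ?_⟩⟩
  · rw [mul_smul_comm, e, smul_smul, inv_mul_cancel₀ hc, one_smul]
  · rw [smul_mul_assoc, e', smul_smul, inv_mul_cancel₀ hd, one_smul]

theorem PR.injective (h : PR ρ) (x : P) {v : V} (hv : ρ x v = 0) : v = 0 := by
  obtain ⟨u, hu⟩ := h.isUnit x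
  have : (↑u⁻¹ * (u : Module.End ℂ V)) v = 0 := by
    rw [Module.End.mul_apply, hu, hv, map_zero]
  simpa using this

theorem PR.mul' (h : PR ρ) (x y : P) : ∃ c : ℂ, c ≠ 0 ∧ ρ (x * y) = c • (ρ x * ρ y) := by
  obtain ⟨c, hc, e⟩ := h.mul x y
  exact ⟨c⁻¹, inv_ne_zero hc, by rw [e, smul_smul, inv_mul_cancel₀ hc, one_smul]⟩

theorem PR.conj (h : PR ρ) (x y : P) :
    ∃ c : ℂ, c ≠ 0 ∧ ρ x * ρ y = c • (ρ (x * y * x⁻¹) * ρ x) := by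
  obtain ⟨c, hc, e⟩ := h.mul x y
  obtain ⟨d, hd, e'⟩ := h.mul' (x * y * x⁻¹) x
  refine ⟨c * d, mul_ne_zero hc hd, ?_⟩
  rw [e, mul_smul, ← e']; simp

theorem PR.pow (h : PR ρ) (x : P) (n : ℕ) : ∃ c : ℂ, c ≠ 0 ∧ ρ x ^ n = c • ρ (x ^ n) := by
  induction n with
  | zero =>
    obtain ⟨d, hd, e'⟩ := h.one
    exact ⟨d⁻¹, inv_ne_zero hd, by rw [pow_zero, pow_zero, e', smul_smul, inv_mul_cancel₀ hd, one_smul]⟩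
  | succ n ih =>
    obtain ⟨c, hc, e⟩ := ih
    obtain ⟨d, hd, e'⟩ := h.mul (x ^ n) x
    exact ⟨c * d, mul_ne_zero hc hd, by rw [pow_succ, e, smul_mul_assoc, e', smul_smul, pow_succ]⟩

theorem PR.comp (h : PR ρ) {Q : Type} [Group Q] (f : Q →* P) : PR (fun q => ρ (f q)) where
  one := by simpa using h.one
  mul x y := by simpa using h.mul (f x) (f y)

theorem PR.restrict (h : PR ρ) (H : Subgroup P) : PR (fun q : H => ρ q) := h.comp H.subtype

theorem Scal.commute {a : Module.End ℂ V} (h : Scal a) (b : Module.End ℂ V) : a * b = b * a := by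
  obtain ⟨c, rfl⟩ := h
  simp

theorem PR.scal_ne (h : PR ρ) [Nontrivial V] {x : P} (hs : Scal (ρ x)) :
    ∃ c : ℂ, c ≠ 0 ∧ ρ x = c • (1 : Module.End ℂ V) := by
  obtain ⟨c, hc⟩ := hs
  refine ⟨c, ?_, hc⟩
  rintro rfl
  obtain ⟨v, hv⟩ := exists_ne (0 : V)
  exact hv (h.injective x (by rw [hc]; simp))

theorem PR.scal_conj (h : PR ρ) {x y : P} (hs : Scal (ρ y)) : Scal (ρ (x * y * x⁻¹)) := by
  obtain ⟨c, hc, e⟩ := h.conj x y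
  rw [← hs.commute] at e
  have : ρ y = c • ρ (x * y * x⁻¹) := by
    rw [← smul_mul_assoc] at e
    exact (h.isUnit x).mul_left_injective e
  obtain ⟨d, hd⟩ := hs
  refine ⟨c⁻¹ * d, ?_⟩
  rw [mul_smul, ← hd, this, smul_smul, inv_mul_cancel₀ hc, one_smul]

theorem PR.scal_mul (h : PR ρ) {x y : P} (hx : Scal (ρ x)) (hy : Scal (ρ y)) : Scal (ρ (x * y)) := by
  obtain ⟨c, hc, e⟩ := h.mul' x y
  obtain ⟨a, ha⟩ := hx
  obtain ⟨b, hb⟩ := hy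
  exact ⟨c * (a * b), by rw [e, ha, hb]; simp [smul_smul, mul_assoc, mul_comm, mul_left_comm]⟩

/-- The subgroup of elements acting as scalars. -/
def PR.ker (h : PR ρ) [Nontrivial V] : Subgroup P where
  carrier := {x | Scal (ρ x)}
  one_mem' := by obtain ⟨c, _, e⟩ := h.one; exact ⟨c, e⟩
  mul_mem' hx hy := h.scal_mul hx hy
  inv_mem' {x} hx := by
    obtain ⟨c, hc, e⟩ := h.scal_ne hx
    obtain ⟨d, hd, e'⟩ := h.inv x
    refine ⟨c⁻¹ * d, ?_⟩
    rw [mul_smul, ← e', e, smul_mul_assoc, one_mul, smul_smul, inv_mul_cancel₀ hc, one_smul]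

theorem PR.mem_ker (h : PR ρ) [Nontrivial V] {x : P} : x ∈ h.ker ↔ Scal (ρ x) := Iff.rfl

theorem PR.ker_normal (h : PR ρ) [Nontrivial V] : h.ker.Normal :=
  ⟨fun _ hn _ => h.scal_conj hn⟩

theorem Irr.schur {X : Type} {ρ : X → Module.End ℂ V} [FiniteDimensional ℂ V] (h : Irr ρ)
    {a : Module.End ℂ V} (ha : ∀ x, ρ x * a = a * ρ x) : Scal a := by
  haveI := h.1
  obtain ⟨μ, hμ⟩ := Module.End.exists_eigenvalue a
  rcases h.2 (Module.End.eigenspace a μ) (fun x w hw => by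
    rw [Module.End.mem_eigenspace_iff] at hw ⊢
    rw [← Module.End.mul_apply, ← ha, Module.End.mul_apply, hw, map_smul]) with h1 | h1
  · exact absurd h1 hμ
  · refine ⟨μ, LinearMap.ext fun v => ?_⟩
    have : v ∈ Module.End.eigenspace a μ := by rw [h1]; trivial
    simpa [Module.End.mem_eigenspace_iff] using this

theorem Irr.of_le {X Y : Type} {ρ : X → Module.End ℂ V} {σ : Y → Module.End ℂ V} (h : Irr ρ)
    (hXY : ∀ W : Submodule ℂ V, (∀ y, ∀ w ∈ W, σ y w ∈ W) → (∀ x, ∀ w ∈ W, ρ x w ∈ W)) : Irr σ :=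
  ⟨h.1, fun W hW => h.2 W (hXY W hW)⟩

theorem Irr.finrank_one {X : Type} {ρ : X → Module.End ℂ V} (h : Irr ρ) (hs : ∀ x, Scal (ρ x)) :
    Module.finrank ℂ V = 1 := by
  haveI := h.1
  obtain ⟨v, hv⟩ := exists_ne (0 : V)
  rcases h.2 (ℂ ∙ v) (fun x w hw => by
    obtain ⟨c, hc⟩ := hs x
    rw [hc]; exact Submodule.smul_mem _ c hw) with h1 | h1
  · rw [Submodule.span_singleton_eq_bot] at h1; exact absurd h1 hv
  · exact finrank_eq_one_iff'.2 ⟨v, hv, fun w => by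
      have : w ∈ ℂ ∙ v := by rw [h1]; trivial
      exact Submodule.mem_span_singleton.1 this⟩

theorem PR.quot_eq (h : PR ρ) [Nontrivial V] (K : Subgroup P) [K.Normal]
    (hK : ∀ k ∈ K, Scal (ρ k)) (x : P) :
    ∃ c : ℂ, c ≠ 0 ∧ ρ (Quotient.out (QuotientGroup.mk x : P ⧸ K)) = c • ρ x := by
  obtain ⟨k, hk⟩ := QuotientGroup.mk_out_eq_mul K x
  obtain ⟨c, hc, e⟩ := h.scal_ne (hK k k.2)
  obtain ⟨d, hd, e'⟩ := h.mul' x k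
  refine ⟨d * c, mul_ne_zero hd hc, ?_⟩
  rw [hk, e', e, mul_smul_comm, mul_one, smul_smul]

theorem PR.quot (h : PR ρ) [Nontrivial V] (K : Subgroup P) [K.Normal]
    (hK : ∀ k ∈ K, Scal (ρ k)) : PR (fun q : P ⧸ K => ρ q.out) where
  one := by
    obtain ⟨c, hc, e⟩ := h.quot_eq K hK 1
    obtain ⟨d, hd, e'⟩ := h.one
    exact ⟨c * d, mul_ne_zero hc hd, by
      show ρ (Quotient.out (QuotientGroup.mk 1 : P ⧸ K)) = _
      rw [e, e', smul_smul]⟩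
  mul p q := by
    obtain ⟨x, rfl⟩ := QuotientGroup.mk_surjective p
    obtain ⟨y, rfl⟩ := QuotientGroup.mk_surjective q
    obtain ⟨a, ha, e1⟩ := h.quot_eq K hK x
    obtain ⟨b, hb, e2⟩ := h.quot_eq K hK y
    obtain ⟨c, hc, e3⟩ := h.quot_eq K hK (x * y)
    obtain ⟨d, hd, e4⟩ := h.mul x y
    refine ⟨a * b * d * c⁻¹, by simp [*], ?_⟩
    simp only [← QuotientGroup.mk_mul, e1, e2, e3]
    rw [smul_mul_smul_comm, e4, smul_smul, smul_smul]
    congr 1; field_simp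

theorem PR.quot_irr (h : PR ρ) (K : Subgroup P) [K.Normal]
    (hK : ∀ k ∈ K, Scal (ρ k)) (hi : Irr ρ) : Irr (fun q : P ⧸ K => ρ q.out) := by
  haveI := hi.1
  refine hi.of_le fun W hW x w hw => ?_
  obtain ⟨c, hc, e⟩ := h.quot_eq K hK x
  have := hW (QuotientGroup.mk x) w hw
  simp only [e, LinearMap.smul_apply] at this
  exact (Submodule.smul_mem_iff _ hc).1 this
end basics

/-- The general divisibility statement for a given projective representation and element. -/
def WIH (n : ℕ) : Prop :=
  ∀ (P : Type) [Group P] [Finite P], Nat.card P < n →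
    ∀ (V : Type) [AddCommGroup V] [Module ℂ V] [FiniteDimensional ℂ V] (ρ : P → Module.End ℂ V),
      PR ρ → Irr ρ → ∀ g : P, LinearMap.trace ℂ V (ρ g) ≠ 0 →
        orderOf g * Module.finrank ℂ V ∣ Nat.card P

theorem WIH.quot {n : ℕ} (ih : WIH n) {P V : Type} [Group P] [Finite P] [AddCommGroup V] [Module ℂ V]
    [FiniteDimensional ℂ V] {ρ : P → Module.End ℂ V} (h : PR ρ) (hi : Irr ρ)
    (K : Subgroup P) [K.Normal] (hK : ∀ k ∈ K, Scal (ρ k)) (hn : Nat.card (P ⧸ K) < n)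
    (g : P) (hg : LinearMap.trace ℂ V (ρ g) ≠ 0) :
    orderOf (QuotientGroup.mk g : P ⧸ K) * Module.finrank ℂ V ∣ Nat.card (P ⧸ K) := by
  haveI := hi.1
  refine ih (P ⧸ K) hn V _ (h.quot K hK) (h.quot_irr K hK hi) _ ?_
  obtain ⟨c, hc, e⟩ := h.quot_eq K hK g
  rw [e, map_smul]
  simp [hc, hg]

section cutsec
variable {V : Type} [AddCommGroup V] [Module ℂ V]

def cut (e a : Module.End ℂ V) : Module.End ℂ (LinearMap.range e) :=
  LinearMap.restrict (e * a) (p := LinearMap.range e) (q := LinearMap.range e)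
    (fun v _ => ⟨a v, rfl⟩)

theorem cut_coe {e : Module.End ℂ V} (he : e * e = e) {a : Module.End ℂ V} (ha : a * e = e * a)
    (v : LinearMap.range e) : ((cut e a v : LinearMap.range e) : V) = a v := by
  obtain ⟨_, w, rfl⟩ := v
  show (e * a) (e w) = a (e w)
  rw [← ha, ← Module.End.mul_apply, ← Module.End.mul_apply, mul_assoc, he]

theorem cut_trace [FiniteDimensional ℂ V] {e : Module.End ℂ V} (he : e * e = e) {a : Module.End ℂ V}
    (ha : a * e = e * a) : LinearMap.trace ℂ _ (cut e a) = LinearMap.trace ℂ V (a * e) := by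
  rw [ha, ← LinearMap.trace_restrict_eq_of_forall_mem (LinearMap.range e) (e * a)
    (fun v => ⟨a v, rfl⟩)]
  rfl

theorem cut_PR {P : Type} [Group P] {ρ : P → Module.End ℂ V} (h : PR ρ) {e : Module.End ℂ V}
    (he : e * e = e) (hc : ∀ x, ρ x * e = e * ρ x) : PR (fun x => cut e (ρ x)) where
  one := by
    obtain ⟨c, h0, hh⟩ := h.one
    refine ⟨c, h0, LinearMap.ext fun v => Subtype.ext ?_⟩
    rw [cut_coe he (hc 1), hh]; rfl
  mul x y := by
    obtain ⟨c, h0, hh⟩ := h.mul x y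
    refine ⟨c, h0, LinearMap.ext fun v => Subtype.ext ?_⟩
    rw [Module.End.mul_apply, cut_coe he (hc x), cut_coe he (hc y), ← Module.End.mul_apply, hh]
    simp [cut_coe he (hc _)]

theorem finrank_range_idem [FiniteDimensional ℂ V] {e : Module.End ℂ V} (he : e * e = e) :
    LinearMap.trace ℂ V e = (Module.finrank ℂ (LinearMap.range e) : ℂ) :=
  (LinearMap.IsIdempotentElem.isProj_range (f := e) he).trace
end cutsec

section imp
variable {P V : Type} [Group P] [AddCommGroup V] [Module ℂ V] {ρ : P → Module.End ℂ V}

/-- Elements whose operators commute with `a`. -/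
def PR.comm (h : PR ρ) (a : Module.End ℂ V) : Subgroup P where
  carrier := {x | ρ x * a = a * ρ x}
  one_mem' := by obtain ⟨c, _, e⟩ := h.one; simp [e]
  mul_mem' {x y} hx hy := by
    obtain ⟨c, _, e⟩ := h.mul' x y
    simp only [Set.mem_ofPred_eq] at *
    rw [e, smul_mul_assoc, mul_smul_comm, mul_assoc, hy, ← mul_assoc, hx, mul_assoc]
  inv_mem' {x} hx := by
    simp only [Set.mem_ofPred_eq] at *
    obtain ⟨c, _, e⟩ := h.inv x
    refine (h.isUnit x).mul_right_injective ?_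
    simp only
    rw [← mul_assoc, e, ← mul_assoc, hx, mul_assoc, e]
    simp

theorem PR.mem_comm (h : PR ρ) {a : Module.End ℂ V} {x : P} :
  x ∈ h.comm a ↔ ρ x * a = a * ρ x := Iff.rfl

theorem PR.r1 (h : PR ρ) (x : P) : ρ x * Ring.inverse (ρ x) = 1 := Ring.mul_inverse_cancel _ (h.isUnit x)
theorem PR.r2 (h : PR ρ) (x : P) : Ring.inverse (ρ x) * ρ x = 1 := Ring.inverse_mul_cancel _ (h.isUnit x)

theorem imprim [FiniteDimensional ℂ V] [Finite P] (ih : WIH (Nat.card P)) (h : PR ρ) (hi : Irr ρ)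
    (e : Module.End ℂ V) (he : e * e = e) (h0 : e ≠ 0) (h1 : e ≠ 1)
    (hx : ∀ x, ρ x * e = e * ρ x ∨ e * ρ x * e = 0)
    (g : P) (hg : LinearMap.trace ℂ V (ρ g) ≠ 0) :
    orderOf g * Module.finrank ℂ V ∣ Nat.card P := by
  classical
  have := Fintype.ofFinite P
  have := hi.1
  set T := h.comm e with hT
  set cj : P → Module.End ℂ V := fun x => ρ x * e * Ring.inverse (ρ x) with hcj
  have hcj1 : ∀ y x, ρ y * cj x = cj (y * x) * ρ y := by
    intro y x
    apply (h.isUnit x).mul_left_injective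
    obtain ⟨c, hc, e1⟩ := h.mul y x
    simp only [hcj]
    rw [mul_assoc, mul_assoc, mul_assoc, h.r2, mul_one, mul_assoc _ _ (ρ x), e1, mul_smul_comm,
      mul_assoc, h.r2, mul_one, ← smul_mul_assoc, ← e1, mul_assoc]
  set s := ∑ x, cj x with hs
  have hsc : Scal s := by
    refine hi.schur fun y => ?_
    rw [hs, Finset.mul_sum, Finset.sum_mul]
    refine Fintype.sum_equiv (Equiv.mulLeft y) _ _ fun x => ?_
    simpa using hcj1 y x
  obtain ⟨c, hc⟩ := hsc
  have hes : e * s = (Nat.card T : ℂ) • e := by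
    have : ∀ x, e * cj x = if x ∈ T then e else 0 := by
      intro x
      split_ifs with hxT
      · simp only [hcj]
        rw [(h.mem_comm).1 hxT, mul_assoc e, h.r1, mul_one, he]
      · have := (hx x).resolve_left hxT
        simp only [hcj]
        rw [← mul_assoc, ← mul_assoc, this, zero_mul]
    rw [hs, Finset.mul_sum, Finset.sum_congr rfl fun x _ => this x, ← Finset.sum_filter,
      Finset.sum_const, Nat.cast_smul_eq_nsmul]
    congr 1
    rw [Nat.card_eq_fintype_card, Fintype.card_subtype]
  have hcT : c = Nat.card T := by
    rw [hc, mul_smul_comm, mul_one] at hes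
    exact smul_left_injective ℂ h0 hes
  have htr : (Nat.card P : ℂ) * Module.finrank ℂ (LinearMap.range e) = Nat.card T * Module.finrank ℂ V := by
    have e1 : LinearMap.trace ℂ V s = Nat.card P * Module.finrank ℂ (LinearMap.range e) := by
      rw [hs, map_sum, Finset.sum_congr rfl (g := fun _ => LinearMap.trace ℂ V e) (fun x _ => ?_)]
      · rw [finrank_range_idem he]; simp
      · simp only [hcj]
        rw [LinearMap.trace_mul_comm, ← mul_assoc, h.r2, one_mul]
    rw [← e1, hc, map_smul, LinearMap.trace_one, hcT, smul_eq_mul]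
  have htr' : Nat.card P * Module.finrank ℂ (LinearMap.range e) = Nat.card T * Module.finrank ℂ V := by
    exact_mod_cast htr
  have hex : ∃ x, LinearMap.trace ℂ V (ρ g * cj x) ≠ 0 := by
    by_contra! hcon
    have : LinearMap.trace ℂ V (ρ g * s) = 0 := by
      rw [hs, Finset.mul_sum, map_sum]
      exact Finset.sum_eq_zero fun x _ => hcon x
    rw [hc, mul_smul_comm, mul_one, map_smul, smul_eq_mul, hcT] at this
    have hT0 : (Nat.card T : ℂ) ≠ 0 := by exact_mod_cast Nat.card_pos.ne'
    exact mul_ne_zero hT0 hg this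
  obtain ⟨x, hxg⟩ := hex
  obtain ⟨d, hd, e2⟩ := h.conj x (x⁻¹ * g * x)
  rw [show x * (x⁻¹ * g * x) * x⁻¹ = g by group] at e2
  have hg' : LinearMap.trace ℂ V (ρ (x⁻¹ * g * x) * e) ≠ 0 := by
    intro h3
    apply hxg
    simp only [hcj]
    rw [← mul_assoc, LinearMap.trace_mul_comm, ← mul_assoc, ← mul_assoc]
    have : ρ g * ρ x = d⁻¹ • (ρ x * ρ (x⁻¹ * g * x)) := by
      rw [e2, smul_smul, inv_mul_cancel₀ hd, one_smul]
    rw [mul_assoc _ (ρ g), this, mul_smul_comm, ← mul_assoc, h.r2, one_mul, smul_mul_assoc, map_smul, h3, smul_zero]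
  have hgT : x⁻¹ * g * x ∈ T := by
    refine (hx _).resolve_right fun h4 => hg' ?_
    rw [← he, ← mul_assoc, LinearMap.trace_mul_comm, ← mul_assoc, h4, map_zero]
  have hTlt : Nat.card T < Nat.card P := by
    refine lt_of_le_of_ne (Subgroup.card_le_card_group T) fun hEq => ?_
    have hTop := Subgroup.eq_top_of_card_eq T hEq
    have : Scal e := hi.schur fun y => by
      have : y ∈ T := by rw [hTop]; trivial
      exact this
    obtain ⟨a, rfl⟩ := this
    have ha : a * a = a := by
      have h5 : (a * a) • (1 : Module.End ℂ V) = a • 1 := by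
        simpa [smul_smul] using he
      exact smul_left_injective ℂ (one_ne_zero) h5
    rcases eq_or_ne a 0 with h6 | h6
    · simp [h6] at h0
    · have : a = 1 := mul_left_cancel₀ h6 (by rw [ha, mul_one])
      simp [this] at h1
  have hcom : ∀ t : T, ρ t * e = e * ρ t := fun t => t.2
  have hirr : Irr (fun t : T => cut e (ρ t)) := by
    refine ⟨?_, fun W hW => ?_⟩
    · by_contra hnt
      rw [not_nontrivial_iff_subsingleton, Submodule.subsingleton_iff_eq_bot, LinearMap.range_eq_bot] at hnt
      exact h0 hnt
    · set W' : Submodule ℂ V := ⨆ x, (W.map (LinearMap.range e).subtype).map (ρ x) with hW'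
      have hst : ∀ y, ∀ w ∈ W', ρ y w ∈ W' := by
        intro y w hw
        have : W' ≤ W'.comap (ρ y) := by
          refine iSup_le fun x => ?_
          rintro _ ⟨v, hv, rfl⟩
          obtain ⟨c, hc, e3⟩ := h.mul y x
          have h7 : ρ (y * x) v ∈ W' := Submodule.mem_iSup_of_mem (y * x) ⟨v, hv, rfl⟩
          show ρ y (ρ x v) ∈ W'
          rw [← Module.End.mul_apply, e3]
          exact Submodule.smul_mem _ c h7
        exact this hw
      rcases hi.2 W' hst with hb | ht
      · left
        rw [eq_bot_iff] at hb ⊢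
        intro w hw
        have h7 : ρ 1 w ∈ W' := Submodule.mem_iSup_of_mem 1 ⟨w, ⟨w, hw, rfl⟩, rfl⟩
        have := h.injective 1 ((Submodule.mem_bot _).1 (hb h7))
        exact (Submodule.mem_bot _).2 (Subtype.ext this)
      · right
        rw [eq_top_iff]
        have key : W' ≤ (W.map (LinearMap.range e).subtype).comap e := by
          refine iSup_le fun x => ?_
          rintro _ ⟨_, ⟨w, hw, rfl⟩, rfl⟩
          have hew : e w = w := by
            obtain ⟨_, u, rfl⟩ := w
            show e (e u) = e u
            rw [← Module.End.mul_apply, he]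
          show e (ρ x w) ∈ W.map (LinearMap.range e).subtype
          rcases hx x with h8 | h8
          · rw [← Module.End.mul_apply, ← h8, Module.End.mul_apply, hew]
            refine ⟨_, hW ⟨x, h8⟩ w hw, ?_⟩
            exact cut_coe he h8 w
          · rw [← hew, ← Module.End.mul_apply, ← Module.End.mul_apply, h8]
            exact Submodule.zero_mem _
        rintro ⟨_, u, rfl⟩ -
        have : u ∈ W' := by rw [ht]; trivial
        obtain ⟨w, hw, hwe⟩ := key this
        have : w = ⟨e u, ⟨u, rfl⟩⟩ := Subtype.ext hwe
        rwa [← this]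
  have hfin := ih T hTlt (LinearMap.range e) _ (cut_PR (h.restrict T) he hcom) hirr ⟨_, hgT⟩
    (by rw [cut_trace he (hcom _)]; exact hg')
  have ho : orderOf (⟨x⁻¹ * g * x, hgT⟩ : T) = orderOf g := by
    rw [← Subgroup.orderOf_coe]
    show orderOf (x⁻¹ * g * x) = orderOf g
    have : x⁻¹ * g * x = MulAut.conj x⁻¹ g := by simp
    rw [this]
    exact orderOf_injective (MulAut.conj x⁻¹).toMonoidHom (MulAut.conj x⁻¹).injective g
  rw [ho] at hfin
  have hpos : 0 < Nat.card T := Nat.card_pos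
  refine Nat.dvd_of_mul_dvd_mul_left hpos ?_
  calc Nat.card T * (orderOf g * Module.finrank ℂ V) = (orderOf g * Module.finrank ℂ (LinearMap.range e)) * Nat.card P := by
        rw [mul_left_comm, ← htr']; ring
    _ ∣ _ := Nat.mul_dvd_mul_right hfin _
end imp

section wedd
variable {P V : Type} [Group P] [AddCommGroup V] [Module ℂ V] {ρ : P → Module.End ℂ V}

/-- The enveloping algebra of a subgroup. -/
def env (ρ : P → Module.End ℂ V) (N : Subgroup P) : Subalgebra ℂ (Module.End ℂ V) :=
  Algebra.adjoin ℂ (ρ '' (N : Set P))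

theorem mem_env {N : Subgroup P} {x : P} (hx : x ∈ N) : ρ x ∈ env ρ N :=
  Algebra.subset_adjoin ⟨x, hx, rfl⟩

theorem env_comm {N : Subgroup P} {a : Module.End ℂ V} (ha : ∀ x ∈ N, ρ x * a = a * ρ x)
    {b : Module.End ℂ V} (hb : b ∈ env ρ N) : b * a = a * b := by
  induction hb using Algebra.adjoin_induction with
  | mem x hx => obtain ⟨y, hy, rfl⟩ := hx; exact ha y hy
  | algebraMap r => exact Algebra.commutes r a
  | add x y _ _ h1 h2 => rw [add_mul, mul_add, h1, h2]
  | mul x y _ _ h1 h2 => rw [mul_assoc, h2, ← mul_assoc, h1, mul_assoc]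

theorem env_stable {N : Subgroup P} {W : Submodule ℂ V} (hW : ∀ x ∈ N, ∀ w ∈ W, ρ x w ∈ W)
    {b : Module.End ℂ V} (hb : b ∈ env ρ N) : ∀ w ∈ W, b w ∈ W := by
  induction hb using Algebra.adjoin_induction with
  | mem x hx => obtain ⟨y, hy, rfl⟩ := hx; exact hW y hy
  | algebraMap r =>
    intro w hw
    rw [Module.algebraMap_end_apply]
    exact Submodule.smul_mem _ _ hw
  | add x y _ _ h1 h2 => exact fun w hw => Submodule.add_mem _ (h1 w hw) (h2 w hw)
  | mul x y _ _ h1 h2 => exact fun w hw => h1 _ (h2 w hw)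

theorem env_conj (h : PR ρ) {N : Subgroup P} [hN : N.Normal] (x : P)
    {b : Module.End ℂ V} (hb : b ∈ env ρ N) : ρ x * b * Ring.inverse (ρ x) ∈ env ρ N := by
  induction hb using Algebra.adjoin_induction with
  | mem y hy =>
    obtain ⟨y, hy, rfl⟩ := hy
    obtain ⟨c, hc, e⟩ := h.conj x y
    rw [e, smul_mul_assoc, mul_assoc, h.r1, mul_one]
    exact Subalgebra.smul_mem _ (mem_env (hN.conj_mem y hy x)) c
  | algebraMap r =>
    rw [← Algebra.commutes, mul_assoc, h.r1, mul_one]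
    exact Subalgebra.algebraMap_mem _ _
  | add y z _ _ h1 h2 => rw [mul_add, add_mul]; exact add_mem h1 h2
  | mul y z _ _ h1 h2 =>
    have : ρ x * (y * z) * Ring.inverse (ρ x) =
      (ρ x * y * Ring.inverse (ρ x)) * (ρ x * z * Ring.inverse (ρ x)) := by
      rw [mul_assoc _ _ (ρ x * z * _), ← mul_assoc (Ring.inverse (ρ x)), ← mul_assoc (Ring.inverse (ρ x)),
        h.r2, one_mul]
      simp only [mul_assoc]
    rw [this]; exact mul_mem h1 h2

/-- Conjugation on the enveloping algebra. -/
noncomputable def cjHom (h : PR ρ) (N : Subgroup P) [hN : N.Normal] (x : P) :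
    env ρ N →ₐ[ℂ] env ρ N where
  toFun b := ⟨ρ x * b * Ring.inverse (ρ x), env_conj h x b.2⟩
  map_one' := Subtype.ext (by simp [h.r1])
  map_zero' := Subtype.ext (by simp)
  map_add' a b := Subtype.ext (by simp [mul_add, add_mul])
  map_mul' a b := Subtype.ext (by
    show ρ x * (a.1 * b.1) * Ring.inverse (ρ x) =
      (ρ x * a.1 * Ring.inverse (ρ x)) * (ρ x * b.1 * Ring.inverse (ρ x))
    rw [mul_assoc _ _ (ρ x * b.1 * _), ← mul_assoc (Ring.inverse (ρ x)), ← mul_assoc (Ring.inverse (ρ x)),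
        h.r2, one_mul]
    simp only [mul_assoc])
  commutes' r := Subtype.ext (by
    show ρ x * algebraMap ℂ (Module.End ℂ V) r * Ring.inverse (ρ x) = algebraMap ℂ (Module.End ℂ V) r
    rw [← Algebra.commutes, mul_assoc, h.r1, mul_one])

theorem cjHom_spec (h : PR ρ) (N : Subgroup P) [hN : N.Normal] (x : P) (b : env ρ N) :
    ρ x * b.1 = (cjHom h N x b).1 * ρ x := by
  show _ = ρ x * b * Ring.inverse (ρ x) * ρ x
  rw [mul_assoc, h.r2, mul_one]

theorem cjHom_inj (h : PR ρ) (N : Subgroup P) [hN : N.Normal] (x : P) :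
    Function.Injective (cjHom h N x) := by
  intro a b hab
  apply Subtype.ext
  apply (h.isUnit x).mul_right_injective
  show ρ x * a.1 = ρ x * b.1
  rw [cjHom_spec h N x a, cjHom_spec h N x b, hab]

variable [FiniteDimensional ℂ V]

noncomputable def cjEquiv (h : PR ρ) (N : Subgroup P) [hN : N.Normal] (x : P) :
    env ρ N ≃ₐ[ℂ] env ρ N :=
  AlgEquiv.ofBijective (cjHom h N x)
    ⟨cjHom_inj h N x, (LinearMap.injective_iff_surjective (f := (cjHom h N x).toLinearMap)).1
      (cjHom_inj h N x)⟩

theorem cjEquiv_spec (h : PR ρ) (N : Subgroup P) [hN : N.Normal] (x : P) (b : env ρ N) :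
    ρ x * b.1 = (cjEquiv h N x b).1 * ρ x := cjHom_spec h N x b

theorem env_jacobson (h : PR ρ) (hi : Irr ρ) (N : Subgroup P) [hN : N.Normal] :
    Ring.jacobson (env ρ N) = ⊥ := by
  have := hi.1
  let J : Submodule (env ρ N) V := Module.jacobson (env ρ N) V
  have : Module.Finite (env ρ N) V := Module.Finite.of_restrictScalars_finite ℂ _ _
  have hJ : J < ⊤ := Module.jacobson_lt_top _ _
  have hst : ∀ x, ∀ w ∈ J.restrictScalars ℂ, ρ x w ∈ J.restrictScalars ℂ := by
    intro x w hw
    let σ : env ρ N →+* env ρ N := (cjEquiv h N x : env ρ N ≃+* env ρ N)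
    have : RingHomSurjective σ := ⟨(cjEquiv h N x).surjective⟩
    let f : V →ₛₗ[σ] V :=
      { toFun := ρ x
        map_add' := map_add _
        map_smul' := fun b v => by
          show (ρ x * b.1) v = ((cjEquiv h N x b).1 * ρ x) v
          rw [cjEquiv_spec h N x b] }
    exact Module.le_comap_jacobson f hw
  rcases hi.2 _ hst with h1 | h1
  · rw [eq_bot_iff]
    intro b hb
    rw [Submodule.mem_bot]
    apply Subtype.ext
    refine LinearMap.ext fun v => ?_
    have h2 : b • v ∈ Ring.jacobson (env ρ N) • (⊤ : Submodule (env ρ N) V) :=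
      Submodule.smul_mem_smul hb trivial
    have h3 : b • v ∈ J.restrictScalars ℂ := Ring.jacobson_smul_top_le _ _ h2
    rw [h1] at h3
    exact h3
  · rw [Submodule.restrictScalars_eq_top_iff] at h1
    exact absurd h1 hJ.ne

theorem wedd (h : PR ρ) (hi : Irr ρ) (N : Subgroup P) [hN : N.Normal] :
    (∃ n : ℕ, NeZero n ∧ Nonempty (env ρ N ≃ₐ[ℂ] Matrix (Fin n) (Fin n) ℂ)) ∨
    (∃ e : env ρ N, e * e = e ∧ e ≠ 0 ∧ e ≠ 1 ∧ (∀ b, e * b = b * e) ∧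
      ∀ f, f * f = f → (∀ b, f * b = b * f) → e * f = 0 ∨ e * f = e) := by
  classical
  have := hi.1
  have : IsArtinianRing (env ρ N) := IsArtinianRing.of_finite ℂ _
  have : IsSemisimpleRing (env ρ N) :=
    IsArtinianRing.isSemisimpleRing_iff_jacobson.2 (env_jacobson h hi N)
  obtain ⟨n, d, hd, ⟨φ⟩⟩ := IsSemisimpleRing.exists_algEquiv_pi_matrix_of_isAlgClosed ℂ (env ρ N)
  have hn : Nonempty (Fin n) := by
    by_contra hne
    rw [not_nonempty_iff] at hne
    have : (1 : env ρ N) = 0 := φ.injective (Subsingleton.elim _ _)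
    exact one_ne_zero this
  obtain ⟨i⟩ := hn
  by_cases hij : ∃ j, j ≠ i
  · right
    obtain ⟨j, hj⟩ := hij
    have := hd i
    have := hd j
    refine ⟨φ.symm (Pi.single i 1), ?_, ?_, ?_, ?_, ?_⟩
    · rw [← map_mul, ← Pi.single_mul, mul_one]
    · intro h0
      have h1 := congrArg φ h0
      rw [AlgEquiv.apply_symm_apply, map_zero] at h1
      have h2 := congrFun h1 i
      simp at h2
    · intro h0
      have h1 := congrArg φ h0
      rw [AlgEquiv.apply_symm_apply, map_one] at h1
      have h2 := congrFun h1 j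
      rw [Pi.single_eq_of_ne hj] at h2
      simp at h2
    · intro b
      apply φ.injective
      rw [map_mul, map_mul, AlgEquiv.apply_symm_apply]
      ext1 k
      rcases eq_or_ne k i with rfl | hk
      · simp
      · simp [Pi.single_eq_of_ne hk]
    · intro f hf hfc
      have hc : φ f i ∈ Set.range (Matrix.scalar (Fin (d i)) (α := ℂ)) := by
        rw [Matrix.mem_range_scalar_iff_commute_single']
        intro a b
        have h1 := hfc (φ.symm (Pi.single i (Matrix.single a b 1)))
        have h2 := congrArg φ h1
        rw [map_mul, map_mul, AlgEquiv.apply_symm_apply] at h2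
        have h3 := congrFun h2 i
        simp only [Pi.mul_apply, Pi.single_eq_same] at h3
        exact h3.symm
      obtain ⟨c, hc⟩ := hc
      have hcc : c * c = c := by
        have h1 := congrFun (congrArg φ hf) i
        rw [map_mul, Pi.mul_apply, ← hc, ← map_mul] at h1
        exact Matrix.scalar_inj.1 h1
      have key : φ (φ.symm (Pi.single i 1) * f) = Pi.single i (Matrix.scalar (Fin (d i)) c) := by
        rw [map_mul, AlgEquiv.apply_symm_apply]
        ext1 k
        rcases eq_or_ne k i with rfl | hk
        · simp [← hc]
        · simp [Pi.single_eq_of_ne hk]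
      rcases eq_or_ne c 0 with h6 | h6
      · left
        apply φ.injective
        rw [key, h6]; simp
      · right
        have : c = 1 := mul_left_cancel₀ h6 (by rw [hcc, mul_one])
        apply φ.injective
        rw [key, this]; simp
  · left
    push Not at hij
    have : Unique (Fin n) := ⟨⟨i⟩, fun j => by rw [hij j]; rfl⟩
    refine ⟨d default, hd _, ⟨φ.trans ?_⟩⟩
    refine AlgEquiv.ofBijective (Pi.evalAlgHom ℂ (fun i => Matrix (Fin (d i)) (Fin (d i)) ℂ) default) ⟨?_, ?_⟩
    · intro a b hab
      funext k
      rw [Unique.eq_default k]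
      exact hab
    · intro b
      exact ⟨Pi.single default b, by simp⟩

theorem clifford [Finite P] (ih : WIH (Nat.card P)) (h : PR ρ) (hi : Irr ρ) (N : Subgroup P)
    [hN : N.Normal] (g : P) (hg : LinearMap.trace ℂ V (ρ g) ≠ 0) :
    (orderOf g * Module.finrank ℂ V ∣ Nat.card P) ∨
    (∃ n : ℕ, NeZero n ∧ Nonempty (env ρ N ≃ₐ[ℂ] Matrix (Fin n) (Fin n) ℂ)) := by
  rcases wedd h hi N with h1 | ⟨e, he, h0, h1, hc, hf⟩
  · exact Or.inr h1
  · left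
    refine imprim ih h hi e.1 (congrArg Subtype.val he) (fun h2 => h0 (Subtype.ext h2))
      (fun h2 => h1 (Subtype.ext h2)) (fun x => ?_) g hg
    set φ := cjEquiv h N x with hφ
    have hs := cjEquiv_spec h N x
    have cen : ∀ ψ : env ρ N ≃ₐ[ℂ] env ρ N, (∀ b, ψ e * b = b * ψ e) := by
      intro ψ b
      obtain ⟨b, rfl⟩ := ψ.surjective b
      rw [← map_mul, ← map_mul, hc]
    have idm : ∀ ψ : env ρ N ≃ₐ[ℂ] env ρ N, ψ e * ψ e = ψ e := by
      intro ψ; rw [← map_mul, he]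
    rcases hf (φ e) (idm φ) (cen φ) with h2 | h2
    · right
      rw [mul_assoc, hs e, ← mul_assoc]
      have := congrArg Subtype.val h2
      rw [show e.1 * (cjEquiv h N x e).1 = 0 from this, zero_mul]
    · left
      rcases hf (φ.symm e) (idm _) (cen _) with h3 | h3
      · exfalso
        have := congrArg φ h3
        rw [map_mul, AlgEquiv.apply_symm_apply, map_zero, ← hc, h2] at this
        exact h0 this
      · have := congrArg φ h3
        rw [map_mul, AlgEquiv.apply_symm_apply, ← hc, h2] at this
        rw [hs e, ← hφ, ← this]
end wedd

section decsec

abbrev EU (n : ℕ) := Module.End ℂ (Fin n → ℂ)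

noncomputable def mu {n : ℕ} (i j : Fin n) : EU n :=
  Matrix.toLinAlgEquiv' (Matrix.single i j (1 : ℂ))

theorem mu_mul {n : ℕ} (i j k : Fin n) : mu i j * mu j k = mu i k := by
  rw [mu, mu, ← map_mul, Matrix.single_mul_single_same, mul_one, mu]

theorem mu_mul_ne {n : ℕ} (i j k l : Fin n) (h : j ≠ k) : mu i j * mu k l = 0 := by
  rw [mu, mu, ← map_mul, Matrix.single_mul_single_of_ne _ _ _ _ h, map_zero]

theorem mu_sum {n : ℕ} : ∑ i : Fin n, mu i i = 1 := by
  simp only [mu]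
  rw [← map_sum, ← map_one (Matrix.toLinAlgEquiv' (R := ℂ) (n := Fin n))]
  congr 1
  ext a b
  rw [Matrix.sum_apply, Finset.sum_eq_single a]
  · simp [Matrix.single_apply, Matrix.one_apply]
  · intro c _ hc
    simp [Matrix.single_apply, hc]
  · simp

theorem mu_sandwich {n : ℕ} (i j : Fin n) (b : EU n) : ∃ c : ℂ, mu i i * b * mu j j = c • mu i j := by
  obtain ⟨B, rfl⟩ := Matrix.toLinAlgEquiv'.surjective b
  refine ⟨B i j, ?_⟩
  rw [mu, mu, mu, ← map_mul, ← map_mul, ← map_smul, Matrix.single_mul_mul_single]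
  simp [Matrix.smul_single]

theorem mu_trace {n : ℕ} (i : Fin n) : LinearMap.trace ℂ _ (mu i i) = 1 := by
  rw [mu, show (Matrix.toLinAlgEquiv' (Matrix.single i i (1 : ℂ)) : EU n) = Matrix.toLin' (Matrix.single i i 1) from rfl,
    Matrix.trace_toLin'_eq, Matrix.trace_single_eq_same]

theorem tr_unique {n : ℕ} (F : EU n →ₗ[ℂ] ℂ) (hF : ∀ a b, F (a * b) = F (b * a)) (k : Fin n) (b : EU n) :
    F b = LinearMap.trace ℂ _ b * F (mu k k) := by
  have key : ∀ G : EU n →ₗ[ℂ] ℂ, (∀ a b, G (a * b) = G (b * a)) → G (mu k k) = 0 → ∀ b, G b = 0 := by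
    intro G hG h0 b
    have e1 : b = ∑ i, ∑ j, mu i i * b * mu j j := by
      simp_rw [← Finset.mul_sum, mu_sum, mul_one, ← Finset.sum_mul, mu_sum, one_mul]
    rw [e1]
    simp only [map_sum]
    refine Finset.sum_eq_zero fun i _ => Finset.sum_eq_zero fun j _ => ?_
    obtain ⟨c, hc⟩ := mu_sandwich i j b
    rw [hc, map_smul, ← mu_mul i k j, hG]
    rcases eq_or_ne j i with rfl | h
    · rw [mu_mul, h0, smul_zero]
    · rw [mu_mul_ne _ _ _ _ h, map_zero, smul_zero]
  have := key (F - F (mu k k) • LinearMap.trace ℂ _) (fun a b => by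
    simp only [LinearMap.sub_apply, LinearMap.smul_apply]
    rw [hF, LinearMap.trace_mul_comm]) (by simp [mu_trace]) b
  simp only [LinearMap.sub_apply, LinearMap.smul_apply, smul_eq_mul, sub_eq_zero] at this
  rw [this, mul_comm]

theorem EU_irr {U : Type} [AddCommGroup U] [Module ℂ U] [Nontrivial U] :
    Irr (fun b : Module.End ℂ U => b) := by
  refine ⟨inferInstance, fun W hW => ?_⟩
  by_cases hb : W = ⊥
  · exact Or.inl hb
  · right
    obtain ⟨w, hw, h0⟩ := W.ne_bot_iff.1 hb
    rw [eq_top_iff]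
    intro v _
    obtain ⟨f, hf⟩ := Module.Projective.exists_dual_ne_zero ℂ h0
    have := hW (LinearMap.smulRight f ((f w)⁻¹ • v)) w hw
    simpa [smul_smul, mul_inv_cancel₀ hf] using this

variable {P V : Type} [Group P] [AddCommGroup V] [Module ℂ V]

/-- Tensor decomposition of a projective representation along a normal subgroup. -/
structure Dec (ρ : P → Module.End ℂ V) (N : Subgroup P) where
  n : ℕ
  hn : NeZero n
  Φ : EU n ≃ₐ[ℂ] env ρ N
  σ : P → EU n
  τ₀ : P → Module.End ℂ V
  unit : ∀ x, IsUnit (σ x)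
  fac : ∀ x, ρ x = (Φ (σ x)).1 * τ₀ x
  com : ∀ x b, τ₀ x * (Φ b).1 = (Φ b).1 * τ₀ x

variable {ρ : P → Module.End ℂ V} {N : Subgroup P}

theorem Dec.exists [FiniteDimensional ℂ V] (h : PR ρ) [N.Normal] {n : ℕ} (hn : NeZero n)
    (φ : env ρ N ≃ₐ[ℂ] Matrix (Fin n) (Fin n) ℂ) : Nonempty (Dec ρ N) := by
  let Φ : EU n ≃ₐ[ℂ] env ρ N := (φ.trans Matrix.toLinAlgEquiv').symm
  have hT : ∀ x, ∃ T : (Fin n → ℂ) ≃ₗ[ℂ] (Fin n → ℂ),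
      (Φ.trans ((cjEquiv h N x).trans Φ.symm)) = T.conjAlgEquiv ℂ := fun x =>
    AlgEquiv.eq_linearEquivConjAlgEquiv _
  choose T hT using hT
  have hmul : ∀ a b : EU n, (Φ (a * b)).1 = (Φ a).1 * (Φ b).1 := fun a b => by rw [map_mul]; rfl
  have h1 : ∀ x, (T x).toLinearMap * (T x).symm.toLinearMap = (1 : EU n) := fun x => by
    ext v; simp
  have h2 : ∀ x, (T x).symm.toLinearMap * (T x).toLinearMap = (1 : EU n) := fun x => by
    ext v; simp
  have hΦ1 : (Φ 1).1 = 1 := by rw [map_one]; rfl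
  refine ⟨⟨n, hn, Φ, fun x => (T x).toLinearMap, fun x => (Φ (T x).symm.toLinearMap).1 * ρ x, ?_, ?_, ?_⟩⟩
  · intro x
    exact isUnit_iff_exists.2 ⟨_, h1 x, h2 x⟩
  · intro x
    rw [← mul_assoc, ← hmul, h1, hΦ1, one_mul]
  · intro x b
    have e1 : cjEquiv h N x (Φ b) = Φ ((T x).toLinearMap * b * (T x).symm.toLinearMap) := by
      have := DFunLike.congr_fun (hT x) b
      rw [AlgEquiv.trans_apply, AlgEquiv.trans_apply] at this
      apply Φ.symm.injective
      rw [this, AlgEquiv.symm_apply_apply]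
      rfl
    rw [mul_assoc, cjEquiv_spec h N x (Φ b), e1, ← mul_assoc, ← mul_assoc, ← hmul, ← hmul]
    congr 2
    rw [← mul_assoc, ← mul_assoc, h2, one_mul]

namespace Dec
variable (D : Dec ρ N)

noncomputable def ι : EU D.n →ₐ[ℂ] Module.End ℂ V := (env ρ N).val.comp D.Φ.toAlgHom

theorem fac' (x : P) : ρ x = D.ι (D.σ x) * D.τ₀ x := D.fac x
theorem com' (x : P) (b) : D.τ₀ x * D.ι b = D.ι b * D.τ₀ x := D.com x b
theorem ι_mem (b) : D.ι b ∈ env ρ N := (D.Φ b).2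
theorem ι_surj {a} (ha : a ∈ env ρ N) : ∃ b, D.ι b = a :=
  ⟨D.Φ.symm ⟨a, ha⟩, by show (D.Φ _).1 = _; rw [AlgEquiv.apply_symm_apply]⟩
theorem ι_inj {a b} (h : D.ι a = D.ι b) : a = b := D.Φ.injective (Subtype.ext h)

theorem nontriv : Nontrivial (Fin D.n → ℂ) := by
  have := D.hn
  infer_instance

theorem scal_of {s : EU D.n} (hs : ∀ b, D.ι b * D.ι s = D.ι s * D.ι b) : Scal s := by
  have := D.nontriv
  refine EU_irr.schur fun b => ?_
  have := hs b
  rw [← map_mul, ← map_mul] at this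
  exact D.ι_inj this

theorem tau_unit (h : PR ρ) (x : P) : IsUnit (D.τ₀ x) := by
  have h1 := h.isUnit x
  have h2 : IsUnit (D.ι (D.σ x)) := (D.unit x).map D.ι
  rw [D.fac'] at h1
  obtain ⟨u, hu⟩ := h2
  rw [← hu] at h1
  exact (Units.isUnit_units_mul u _).1 h1

theorem ι_scal {s : EU D.n} (hs : Scal s) : Scal (D.ι s) := by
  obtain ⟨c, rfl⟩ := hs
  exact ⟨c, by rw [map_smul, map_one]⟩

theorem sig_aux {s t : EU D.n} (ht : IsUnit t) {a b : Module.End ℂ V} (hb : IsUnit a)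
    (ha' : ∀ z, a * D.ι z = D.ι z * a) (hb' : ∀ z, b * D.ι z = D.ι z * b)
    (he : D.ι s * a = D.ι t * b) : ∃ c : ℂ, s = c • t ∧ b = c • a := by
  obtain ⟨t, rfl⟩ := ht
  obtain ⟨a, rfl⟩ := hb
  have e1 : D.ι (↑t⁻¹ * s) = b * ↑a⁻¹ := by
    rw [map_mul, Units.eq_mul_inv_iff_mul_eq, mul_assoc, he, ← mul_assoc, ← map_mul]
    simp
  have e2 : Scal (↑t⁻¹ * s : EU D.n) := D.scal_of fun z => by
    rw [e1]
    have : (↑a⁻¹ : Module.End ℂ V) * D.ι z = D.ι z * ↑a⁻¹ := by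
      rw [Units.inv_mul_eq_iff_eq_mul, ← mul_assoc, Units.eq_mul_inv_iff_mul_eq, ha']
    rw [mul_assoc, this, ← mul_assoc, ← hb', mul_assoc]
  obtain ⟨c, hc⟩ := e2
  refine ⟨c, ?_, ?_⟩
  · rw [Units.inv_mul_eq_iff_eq_mul] at hc
    rw [hc]; simp
  · rw [hc, map_smul, map_one, Units.eq_mul_inv_iff_mul_eq] at e1
    rw [← e1]; simp

theorem smul_ne {A : Type} [AddCommGroup A] [Module ℂ A] [Nontrivial A] {s : Module.End ℂ A} (hs : IsUnit s) {c : ℂ}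
    {t : Module.End ℂ A} (e : s = c • t) : c ≠ 0 := by
  rintro rfl
  rw [zero_smul] at e
  rw [e] at hs
  exact not_isUnit_zero hs

theorem mul_aux (h : PR ρ) (x y : P) : ∃ c d : ℂ, c ≠ 0 ∧ d ≠ 0 ∧
    D.σ x * D.σ y = c • D.σ (x * y) ∧ D.τ₀ x * D.τ₀ y = d • D.τ₀ (x * y) := by
  have := D.nontriv
  obtain ⟨k, hk, e⟩ := h.mul x y
  have e2 : D.ι (D.σ x * D.σ y) * (D.τ₀ x * D.τ₀ y) = D.ι (D.σ (x * y)) * (k • D.τ₀ (x * y)) := by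
    rw [mul_smul_comm, ← D.fac', ← e, D.fac' x, D.fac' y, map_mul]
    rw [mul_assoc, mul_assoc, ← mul_assoc (D.τ₀ x), D.com', mul_assoc]
  obtain ⟨c, h1, h2⟩ := D.sig_aux (D.unit _) ((D.tau_unit h x).mul (D.tau_unit h y))
    (fun z => by rw [mul_assoc, D.com', ← mul_assoc, D.com', mul_assoc])
    (fun z => by rw [smul_mul_assoc, D.com', mul_smul_comm]) e2
  have hc : c ≠ 0 := smul_ne ((D.unit x).mul (D.unit y)) h1
  refine ⟨c, c⁻¹ * k, hc, mul_ne_zero (inv_ne_zero hc) hk, h1, ?_⟩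
  rw [mul_smul, h2, smul_smul, inv_mul_cancel₀ hc, one_smul]

theorem one_of_mul {A : Type} [AddCommGroup A] [Module ℂ A] {s : P → Module.End ℂ A} (hs : ∀ x, IsUnit (s x))
    (hm : ∀ x y, ∃ c : ℂ, c ≠ 0 ∧ s x * s y = c • s (x * y)) : PR s where
  mul := hm
  one := by
    obtain ⟨c, hc, e⟩ := hm 1 1
    refine ⟨c, hc, ?_⟩
    apply (hs 1).mul_right_injective
    show s 1 * s 1 = s 1 * _
    rw [e]; simp

theorem PRσ (h : PR ρ) : PR D.σ := one_of_mul D.unit fun x y => by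
  obtain ⟨c, d, hc, hd, e1, e2⟩ := D.mul_aux h x y
  exact ⟨c, hc, e1⟩

theorem PRτ₀ (h : PR ρ) : PR D.τ₀ := one_of_mul (D.tau_unit h) fun x y => by
  obtain ⟨c, d, hc, hd, e1, e2⟩ := D.mul_aux h x y
  exact ⟨d, hd, e2⟩

theorem on_N (h : PR ρ) {x : P} (hx : x ∈ N) : ∃ c : ℂ, ρ x = c • D.ι (D.σ x) ∧ Scal (D.τ₀ x) := by
  obtain ⟨m, hm⟩ := D.ι_surj (mem_env (ρ := ρ) hx)
  obtain ⟨c, h1, h2⟩ := D.sig_aux (s := m) (t := D.σ x) (a := 1) (b := D.τ₀ x) (D.unit x) isUnit_one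
    (fun z => by rw [one_mul, mul_one]) (fun z => D.com' x z) (by rw [mul_one, hm, ← D.fac'])
  exact ⟨c, by rw [← hm, h1, map_smul], ⟨c, h2⟩⟩

theorem irrσ (h : PR ρ) : Irr (fun x : N => D.σ x) := by
  have := D.nontriv
  refine EU_irr.of_le fun W hW => ?_
  have key : ∀ a, ∀ ha : a ∈ env ρ N, ∀ b, D.ι b = a → ∀ w ∈ W, b w ∈ W := by
    intro a ha
    induction ha using Algebra.adjoin_induction with
    | mem x hx =>
      obtain ⟨x, hx, rfl⟩ := hx
      obtain ⟨c, hc, -⟩ := D.on_N h hx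
      intro b hb w hw
      rw [hc, ← map_smul] at hb
      rw [D.ι_inj hb]
      exact Submodule.smul_mem _ _ (hW ⟨x, hx⟩ w hw)
    | algebraMap r =>
      intro b hb w hw
      rw [← AlgHom.commutes D.ι] at hb
      rw [D.ι_inj hb, Module.algebraMap_end_apply]
      exact Submodule.smul_mem _ _ hw
    | add x y h1 h2 i1 i2 =>
      intro b hb w hw
      obtain ⟨a1, rfl⟩ := D.ι_surj h1
      obtain ⟨a2, rfl⟩ := D.ι_surj h2
      rw [← map_add] at hb
      rw [D.ι_inj hb]
      exact Submodule.add_mem _ (i1 _ rfl w hw) (i2 _ rfl w hw)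
    | mul x y h1 h2 i1 i2 =>
      intro b hb w hw
      obtain ⟨a1, rfl⟩ := D.ι_surj h1
      obtain ⟨a2, rfl⟩ := D.ι_surj h2
      rw [← map_mul] at hb
      rw [D.ι_inj hb]
      exact i1 _ rfl _ (i2 _ rfl w hw)
  exact fun b => key _ (D.ι_mem b) b rfl

def z : Fin D.n := ⟨0, Nat.pos_of_ne_zero D.hn.out⟩

noncomputable def e : Module.End ℂ V := D.ι (mu D.z D.z)

theorem e_idem : D.e * D.e = D.e := by rw [e, ← map_mul, mu_mul]

noncomputable abbrev W := LinearMap.range D.e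

noncomputable def τ (x : P) : Module.End ℂ D.W := cut D.e (D.τ₀ x)

theorem PRτ (h : PR ρ) : PR D.τ := cut_PR (D.PRτ₀ h) D.e_idem fun x => D.com' x _

theorem τ_coe (x : P) (v : D.W) : (D.τ x v : V) = D.τ₀ x v := cut_coe D.e_idem (D.com' x _) v

theorem e_ne [Nontrivial V] : D.e ≠ 0 := by
  intro h0
  rw [e, ← map_zero D.ι] at h0
  have h1 := D.ι_inj h0
  have := mu_trace D.z
  rw [h1] at this
  simp at this

theorem ntW [Nontrivial V] : Nontrivial D.W := by
  by_contra hnt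
  rw [not_nontrivial_iff_subsingleton, Submodule.subsingleton_iff_eq_bot, LinearMap.range_eq_bot] at hnt
  exact D.e_ne hnt

theorem irrτ (X : Set P) (hi : Irr (fun x : X => ρ x)) : Irr (fun x : X => D.τ x) := by
  have := hi.1
  refine ⟨D.ntW, fun W' hW => ?_⟩
  set V' : Submodule ℂ V := ⨆ b, (W'.map (LinearMap.range D.e).subtype).map (D.ι b) with hV'
  have hb : ∀ b, ∀ w ∈ V', D.ι b w ∈ V' := by
    intro b w hw
    have : V' ≤ V'.comap (D.ι b) := by
      refine iSup_le fun x => ?_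
      rintro _ ⟨v, hv, rfl⟩
      have h7 : D.ι (b * x) v ∈ V' := Submodule.mem_iSup_of_mem (b * x) ⟨v, hv, rfl⟩
      rw [map_mul] at h7
      exact h7
    exact this hw
  have ht : ∀ x : X, ∀ w ∈ V', D.τ₀ x w ∈ V' := by
    intro x w hw
    have : V' ≤ V'.comap (D.τ₀ x) := by
      refine iSup_le fun b => ?_
      rintro _ ⟨_, ⟨v, hv, rfl⟩, rfl⟩
      show (D.τ₀ x * D.ι b) v ∈ V'
      rw [D.com']
      refine Submodule.mem_iSup_of_mem b ⟨_, ⟨_, hW x v hv, rfl⟩, ?_⟩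
      show D.ι b (D.τ x v : V) = _
      rw [τ_coe]; rfl
    exact this hw
  rcases hi.2 V' (fun x w hw => by
    show ρ x w ∈ V'
    rw [D.fac']
    exact hb _ _ (ht x w hw)) with h1 | h1
  · left
    rw [eq_bot_iff] at h1 ⊢
    intro w hw
    have h7 : D.ι 1 w ∈ V' := Submodule.mem_iSup_of_mem 1 ⟨w, ⟨w, hw, rfl⟩, rfl⟩
    rw [map_one] at h7
    exact (Submodule.mem_bot _).2 (Subtype.ext ((Submodule.mem_bot _).1 (h1 h7)))
  · right
    rw [eq_top_iff]
    have key : V' ≤ (W'.map (LinearMap.range D.e).subtype).comap D.e := by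
      refine iSup_le fun b => ?_
      rintro _ ⟨_, ⟨w, hw, rfl⟩, rfl⟩
      have hew : D.e w = w := by
        obtain ⟨_, u, rfl⟩ := w
        show D.e (D.e u) = D.e u
        rw [← Module.End.mul_apply, D.e_idem]
      obtain ⟨c, hc⟩ := mu_sandwich D.z D.z b
      have h3 : D.e (D.ι b w) = c • (w : V) := by
        conv_lhs => rw [← hew]
        rw [← Module.End.mul_apply, ← Module.End.mul_apply]
        have h5 : D.e * (D.ι b * D.e) = c • D.e := by
          rw [← mul_assoc]; unfold e; rw [← map_mul, ← map_mul, hc, map_smul]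
        rw [mul_assoc, h5, LinearMap.smul_apply, hew]
      show D.e (D.ι b w) ∈ W'.map (LinearMap.range D.e).subtype
      rw [h3]
      exact Submodule.smul_mem _ _ ⟨w, hw, rfl⟩
    rintro ⟨_, u, rfl⟩ -
    have : u ∈ V' := by rw [h1]; trivial
    obtain ⟨w, hw, hwe⟩ := key this
    have : w = ⟨D.e u, ⟨u, rfl⟩⟩ := Subtype.ext hwe
    rwa [← this]

theorem trace_mul {c : Module.End ℂ V} (hc : ∀ b, c * D.ι b = D.ι b * c) (b) :
    LinearMap.trace ℂ V (D.ι b * c) = LinearMap.trace ℂ _ b * LinearMap.trace ℂ V (c * D.e) := by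
  let F : EU D.n →ₗ[ℂ] ℂ := (LinearMap.trace ℂ V) ∘ₗ (LinearMap.mulRight ℂ c) ∘ₗ D.ι.toLinearMap
  have := tr_unique F (fun a b => by
    show LinearMap.trace ℂ V (D.ι (a * b) * c) = LinearMap.trace ℂ V (D.ι (b * a) * c)
    rw [map_mul D.ι, map_mul D.ι, mul_assoc, ← hc b, ← mul_assoc, LinearMap.trace_mul_comm, ← mul_assoc]) D.z b
  rw [show c * D.e = D.e * c from hc _]
  exact this

theorem trace_eq [FiniteDimensional ℂ V] (x : P) : LinearMap.trace ℂ V (ρ x) =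
    LinearMap.trace ℂ _ (D.σ x) * LinearMap.trace ℂ _ (D.τ x) := by
  rw [D.fac', D.trace_mul (D.com' x), τ, cut_trace D.e_idem (D.com' x _)]

theorem dim_eq [FiniteDimensional ℂ V] :
    Module.finrank ℂ V = Module.finrank ℂ (Fin D.n → ℂ) * Module.finrank ℂ D.W := by
  have := D.trace_mul (c := 1) (fun b => by simp) 1
  rw [map_one, one_mul, one_mul, LinearMap.trace_one, LinearMap.trace_one, finrank_range_idem D.e_idem] at this
  exact_mod_cast this

theorem tau_scal_N (h : PR ρ) {x : P} (hx : x ∈ N) : Scal (D.τ x) := by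
  obtain ⟨c, -, d, hd⟩ := D.on_N h hx
  refine ⟨d, LinearMap.ext fun v => Subtype.ext ?_⟩
  rw [τ_coe, hd]; rfl

theorem tau0_scal {x : P} (ht : Scal (D.τ x)) : Scal (D.τ₀ x) := by
  obtain ⟨c, hc⟩ := ht
  have h1 : D.τ₀ x * D.e = c • D.e := by
    refine LinearMap.ext fun v => ?_
    have := congrArg Subtype.val (LinearMap.congr_fun hc ⟨D.e v, v, rfl⟩)
    rw [τ_coe] at this
    exact this
  refine ⟨c, ?_⟩
  have h2 : ∀ i, D.τ₀ x * D.ι (mu i i) = c • D.ι (mu i i) := by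
    intro i
    have : (mu i i : EU D.n) = mu i D.z * mu D.z D.z * mu D.z i := by simp [mu_mul]
    rw [this, map_mul, map_mul, ← mul_assoc, ← mul_assoc, D.com', mul_assoc (D.ι _) (D.τ₀ x)]
    rw [show D.τ₀ x * D.ι (mu D.z D.z) = c • D.ι (mu D.z D.z) from h1]
    simp
  have h3 : (1 : Module.End ℂ V) = ∑ i, D.ι (mu i i) := by rw [← map_sum, mu_sum, map_one]
  calc D.τ₀ x = D.τ₀ x * 1 := (mul_one _).symm
    _ = c • 1 := by rw [h3, Finset.mul_sum, Finset.smul_sum]; exact Finset.sum_congr rfl fun i _ => h2 i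

theorem scal {x : P} (hs : Scal (D.σ x)) (ht : Scal (D.τ x)) : Scal (ρ x) := by
  obtain ⟨c, hc⟩ := D.tau0_scal ht
  obtain ⟨d, hd⟩ := D.ι_scal hs
  exact ⟨d * c, by rw [D.fac', hc, hd]; simp [smul_smul, mul_comm]⟩

end Dec
end decsec

open scoped commutatorElement
section grp
variable {P : Type} [Group P]

theorem card_sup [Finite P] (M : Subgroup P) [M.Normal] (g : P) :
    Nat.card (M ⊔ Subgroup.zpowers g : Subgroup P) = Nat.card M * orderOf (QuotientGroup.mk g : P ⧸ M) := by
  have e1 : M ⊔ Subgroup.zpowers g =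
      (Subgroup.zpowers (QuotientGroup.mk g : P ⧸ M)).comap (QuotientGroup.mk' M) := by
    have : Subgroup.zpowers (QuotientGroup.mk g : P ⧸ M) = (Subgroup.zpowers g).map (QuotientGroup.mk' M) := by
      rw [MonoidHom.map_zpowers]; rfl
    rw [this, Subgroup.comap_map_eq, QuotientGroup.ker_mk', sup_comm]
  have e2 := Subgroup.index_comap_of_surjective (Subgroup.zpowers (QuotientGroup.mk g : P ⧸ M))
    (QuotientGroup.mk'_surjective M)
  rw [← e1] at e2
  have e3 := Subgroup.card_mul_index (M ⊔ Subgroup.zpowers g)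
  have e4 := Subgroup.card_mul_index (Subgroup.zpowers (QuotientGroup.mk g : P ⧸ M))
  have e5 := Subgroup.card_eq_card_quotient_mul_card_subgroup M
  rw [Nat.card_zpowers] at e4
  rw [e2] at e3
  have hpos : 0 < (Subgroup.zpowers (QuotientGroup.mk g : P ⧸ M)).index :=
    Nat.pos_of_ne_zero Subgroup.index_ne_zero_of_finite
  apply Nat.eq_of_mul_eq_mul_right hpos
  rw [e3, e5, ← e4]; ring

theorem orderOf_quot_dvd (K : Subgroup P) [K.Normal] [Finite P] (g : P) :
    orderOf g ∣ orderOf (QuotientGroup.mk g : P ⧸ K) * Nat.card K := by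
  rw [orderOf_dvd_iff_pow_eq_one, pow_mul]
  have : g ^ orderOf (QuotientGroup.mk g : P ⧸ K) ∈ K := by
    rw [← QuotientGroup.eq_one_iff, QuotientGroup.mk_pow, pow_orderOf_eq_one]
  have h := pow_card_eq_one' (x := (⟨_, this⟩ : K))
  exact congrArg Subtype.val h

theorem card_quot_lt [Finite P] (K : Subgroup P) (hK : K ≠ ⊥) : Nat.card (P ⧸ K) < Nat.card P := by
  rw [Subgroup.card_eq_card_quotient_mul_card_subgroup K]
  have h1 : 1 < Nat.card K := by
    rw [Subgroup.one_lt_card_iff_ne_bot]; exact hK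
  have h2 : 0 < Nat.card (P ⧸ K) := Nat.card_pos
  nlinarith

theorem card_lt_of_ne_top [Finite P] (H : Subgroup P) (hH : H ≠ ⊤) : Nat.card H < Nat.card P :=
  lt_of_le_of_ne (Subgroup.card_le_card_group H) fun h => hH (Subgroup.eq_top_of_card_eq H h)

variable {V : Type} [AddCommGroup V] [Module ℂ V] {ρ : P → Module.End ℂ V}

/-- An element centralising a perfect subgroup has an operator commuting with its operators. -/
theorem perfcomm (h : PR ρ) {X : Subgroup P} (hX : X ≤ ⁅X, X⁆) {x : P} (hx : ∀ y ∈ X, x * y = y * x) :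
    ∀ y ∈ X, ρ y * ρ x = ρ x * ρ y := by
  suffices ⁅X, X⁆ ≤ h.comm (ρ x) from fun y hy => this (hX hy)
  rw [Subgroup.commutator_le]
  have key : ∀ y ∈ X, ∃ c : ℂ, c ≠ 0 ∧ ρ y * ρ x = c • (ρ x * ρ y) := by
    intro y hy
    obtain ⟨c, hc, e⟩ := h.conj y x
    obtain ⟨d, hd, e'⟩ := h.conj x y
    rw [hx y hy, mul_inv_cancel_right] at e'
    exact ⟨d⁻¹, inv_ne_zero hd, by rw [e', smul_smul, inv_mul_cancel₀ hd, one_smul]⟩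
  intro a ha b hb
  obtain ⟨s, hs, e1⟩ := key a ha
  obtain ⟨t, ht, e2⟩ := key b hb
  rw [h.mem_comm]
  -- the commutator times `b * a` is `a * b`
  obtain ⟨c, hc, e3⟩ := h.mul' ⁅a, b⁆ (b * a)
  have e4 : ⁅a, b⁆ * (b * a) = a * b := by rw [commutatorElement_def]; group
  rw [e4] at e3
  obtain ⟨c1, hc1, f1⟩ := h.mul' a b
  obtain ⟨c2, hc2, f2⟩ := h.mul' b a
  have g1 : ρ (a * b) * ρ x = (s * t) • (ρ x * ρ (a * b)) := by
    rw [f1, smul_mul_assoc, mul_assoc, e2, mul_smul_comm, ← mul_assoc, e1, smul_mul_assoc, mul_smul_comm,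
      smul_smul, smul_smul, smul_smul, mul_assoc]
    congr 1; ring
  have g2 : ρ (b * a) * ρ x = (s * t) • (ρ x * ρ (b * a)) := by
    rw [f2, smul_mul_assoc, mul_assoc, e1, mul_smul_comm, ← mul_assoc, e2, smul_mul_assoc, mul_smul_comm,
      smul_smul, smul_smul, smul_smul, mul_assoc]
    congr 1; ring
  apply (h.isUnit (b * a)).mul_left_injective
  show ρ ⁅a, b⁆ * ρ x * ρ (b * a) = ρ x * ρ ⁅a, b⁆ * ρ (b * a)
  have hst : s * t ≠ 0 := mul_ne_zero hs ht
  have g2' : ρ x * ρ (b * a) = (s * t)⁻¹ • (ρ (b * a) * ρ x) := by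
    rw [g2, smul_smul, inv_mul_cancel₀ hst, one_smul]
  have e3' : ρ ⁅a, b⁆ * ρ (b * a) = c⁻¹ • ρ (a * b) := by
    rw [e3, smul_smul, inv_mul_cancel₀ hc, one_smul]
  rw [mul_assoc, g2', mul_smul_comm, ← mul_assoc, e3', mul_assoc, e3', smul_mul_assoc, g1, mul_smul_comm,
    smul_smul, smul_smul]
  congr 1
  field_simp

theorem normal_of_gen {N : Subgroup P} {g : P} (hgen : N ⊔ Subgroup.zpowers g = ⊤) {K : Subgroup P}
    (h1 : N ≤ Subgroup.normalizer (K : Set P)) (h2 : g ∈ Subgroup.normalizer (K : Set P)) : K.Normal := by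
  rw [← Subgroup.normalizer_eq_top_iff, eq_top_iff, ← hgen]
  exact sup_le h1 ((Subgroup.zpowers_le).2 h2)

theorem cent_top {N : Subgroup P} {g : P} (hgen : N ⊔ Subgroup.zpowers g = ⊤) {x : P}
    (h1 : ∀ n ∈ N, x * n = n * x) (h2 : x * g = g * x) : x ∈ Subgroup.center P := by
  have : N ⊔ Subgroup.zpowers g ≤ Subgroup.centralizer {x} := by
    refine sup_le (fun n hn => ?_) ((Subgroup.zpowers_le).2 ?_)
    · rw [Subgroup.mem_centralizer_singleton_iff]; exact (h1 n hn).symm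
    · rw [Subgroup.mem_centralizer_singleton_iff]; exact h2.symm
  rw [hgen] at this
  rw [Subgroup.mem_center_iff]
  intro y
  exact Subgroup.mem_centralizer_singleton_iff.1 (this (Subgroup.mem_top y))

theorem normal_of_center {K : Subgroup P} (hK : K ≤ Subgroup.center P) : K.Normal :=
  ⟨fun n hn x => by
    have := Subgroup.mem_center_iff.1 (hK hn) x
    rw [this, mul_inv_cancel_right]; exact hn⟩

theorem abelian_case [Finite P] [FiniteDimensional ℂ V] (ih : WIH (Nat.card P)) (h : PR ρ)
    (N : Subgroup P) [N.Normal]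
    (hmin : ∀ K : Subgroup P, K.Normal → K ≤ N → K = ⊥ ∨ K = N) (hN : N ≠ ⊥)
    (hi : Irr (fun x : N => ρ x)) (hf : ∀ x, Scal (ρ x) → x = 1) (g : P)
    (hgen : N ⊔ Subgroup.zpowers g = ⊤) (hab : ∀ x ∈ N, ∀ y ∈ N, x * y = y * x) :
    orderOf g * Module.finrank ℂ V ∣ Nat.card P := by
  have := hi.1
  set K := N ⊓ Subgroup.centralizer {g} with hK
  have hKc : K ≤ Subgroup.center P := by
    rintro x ⟨hx, hx'⟩
    exact cent_top hgen (hab x hx) (Subgroup.mem_centralizer_singleton_iff.1 hx')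
  rcases hmin K (normal_of_center hKc) inf_le_left with h0 | h0
  · have hNt : N ≠ ⊤ := by
      intro ht
      apply hN
      rw [eq_bot_iff, ← h0]
      intro x hx
      refine ⟨hx, ?_⟩
      show x ∈ Subgroup.centralizer {g}
      rw [Subgroup.mem_centralizer_singleton_iff]
      exact hab x hx g (by rw [ht]; trivial)
    have hd : Module.finrank ℂ V ∣ Nat.card N := by
      have := ih N (card_lt_of_ne_top N hNt) V _ (h.restrict N) hi 1 (by
        obtain ⟨c, hc, e⟩ := h.one
        show LinearMap.trace ℂ V (ρ 1) ≠ 0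
        rw [e, map_smul, LinearMap.trace_one, smul_eq_mul]
        exact mul_ne_zero hc (by exact_mod_cast (Module.finrank_pos (R := ℂ) (M := V)).ne'))
      rwa [orderOf_one, one_mul] at this
    have ho : orderOf g ∣ orderOf (QuotientGroup.mk g : P ⧸ N) := by
      rw [orderOf_dvd_iff_pow_eq_one]
      have : g ^ orderOf (QuotientGroup.mk g : P ⧸ N) ∈ K := by
        refine ⟨?_, ?_⟩
        · show _ ∈ N
          rw [← QuotientGroup.eq_one_iff, QuotientGroup.mk_pow, pow_orderOf_eq_one]
        · show _ ∈ Subgroup.centralizer {g}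
          rw [Subgroup.mem_centralizer_singleton_iff, ← pow_succ, ← pow_succ']
      rw [h0] at this
      exact this
    have e := card_sup N g
    rw [hgen, Subgroup.card_top] at e
    rw [e, mul_comm]
    exact mul_dvd_mul hd ho
  · exfalso
    obtain ⟨n, hn1⟩ := Subgroup.ne_bot_iff_exists_ne_one.1 hN
    have hn := n.2
    have hn1' : (n : P) ≠ 1 := fun h => hn1 (Subtype.ext h)
    have hz : Subgroup.zpowers (n : P) ≤ N := (Subgroup.zpowers_le).2 hn
    rcases hmin (Subgroup.zpowers (n : P)) (normal_of_center ((hz.trans h0.ge).trans hKc)) hz with h1 | h1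
    · rw [Subgroup.zpowers_eq_bot] at h1
      exact hn1' h1
    · apply hn1'
      apply hf
      refine hi.schur fun x => ?_
      have : Subgroup.zpowers (n : P) ≤ h.comm (ρ n) := (Subgroup.zpowers_le).2 (by rw [h.mem_comm])
      rw [h1] at this
      exact this x.2
end grp

open scoped Pointwise commutatorElement
section kge2
variable {P : Type} [Group P]

theorem mem_cj {x y : P} {S : Subgroup P} : y ∈ MulAut.conj x • S ↔ x⁻¹ * y * x ∈ S := by
  rw [Subgroup.mem_pointwise_smul_iff_inv_smul_mem]
  simp [MulAut.smul_def]

theorem cj_mem {x s : P} {S : Subgroup P} (hs : s ∈ S) : x * s * x⁻¹ ∈ MulAut.conj x • S := by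
  rw [mem_cj]; simpa [mul_assoc] using hs

theorem cj_le {N S : Subgroup P} [hN : N.Normal] (h : S ≤ N) (x : P) : MulAut.conj x • S ≤ N := by
  intro y hy
  rw [mem_cj] at hy
  have := hN.conj_mem _ (h hy) x
  simpa [mul_assoc] using this

theorem cj_norm {N S : Subgroup P} [hN : N.Normal] (h : N ≤ Subgroup.normalizer (S : Set P)) (x : P) :
    N ≤ Subgroup.normalizer ((MulAut.conj x • S : Subgroup P) : Set P) := by
  rw [Subgroup.le_normalizer_iff] at *
  intro n hn y hy
  rw [mem_cj] at *
  have := h (x⁻¹ * n * x) (by simpa using hN.conj_mem n hn x⁻¹) _ hy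
  simpa [mul_assoc] using this

theorem cj_self_iff {x : P} {S : Subgroup P} : MulAut.conj x • S = S ↔ x ∈ Subgroup.normalizer (S : Set P) := by
  rw [Subgroup.mem_normalizer_iff'', SetLike.ext_iff]
  constructor
  · intro h y; rw [← mem_cj, h]
  · intro h y; rw [mem_cj]; exact (h y).symm

theorem cj_comm {N S : Subgroup P} [Finite P] [hN : N.Normal] (hSN : S ≤ N)
    (hSn : N ≤ Subgroup.normalizer (S : Set P))
    (hSmin : ∀ K : Subgroup P, K ≤ S → N ≤ Subgroup.normalizer (K : Set P) → K = ⊥ ∨ K = S) (x : P) :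
    MulAut.conj x • S = S ∨ ∀ s ∈ S, ∀ t ∈ MulAut.conj x • S, s * t = t * s := by
  rcases hSmin (S ⊓ MulAut.conj x • S) inf_le_left
    ((le_inf hSn (cj_norm hSn x)).trans (Subgroup.inf_normalizer_le_normalizer_inf)) with h | h
  · right
    intro s hs t ht
    have h1 : s * t * s⁻¹ * t⁻¹ ∈ S ⊓ MulAut.conj x • S := by
      refine ⟨?_, ?_⟩
      · have := (Subgroup.le_normalizer_iff.1 hSn) t (cj_le hSN x ht) s⁻¹ (inv_mem hs)
        have := mul_mem hs this
        simpa [mul_assoc] using this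
      · have := (Subgroup.le_normalizer_iff.1 (cj_norm hSn x)) s (hSN hs) t ht
        exact Subgroup.mul_mem _ this (Subgroup.inv_mem _ ht)
    rw [h, Subgroup.mem_bot] at h1
    have h2 := mul_inv_eq_one.1 h1
    exact (mul_inv_eq_iff_eq_mul.1 h2)
  · left
    have h1 : S ≤ MulAut.conj x • S := h.ge.trans inf_le_right
    have h2 : Nat.card (MulAut.conj x • S : Subgroup P) = Nat.card S := 
      (Nat.card_congr (Subgroup.equivSMul (MulAut.conj x) S).toEquiv).symm
    exact (Subgroup.eq_of_le_of_card_ge h1 h2.le).symm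

theorem cj_sup {N S : Subgroup P} {g : P} [hN : N.Normal] (hgen : N ⊔ Subgroup.zpowers g = ⊤)
    (hmin : ∀ K : Subgroup P, K.Normal → K ≤ N → K = ⊥ ∨ K = N)
    (hS : S ≠ ⊥) (hSN : S ≤ N) (hSn : N ≤ Subgroup.normalizer (S : Set P)) :
    N ≤ ⨆ i : ℤ, MulAut.conj (g ^ i) • S := by
  set M := ⨆ i : ℤ, MulAut.conj (g ^ i) • S with hM
  have hle : S ≤ M := by
    refine le_trans ?_ (le_iSup _ (0 : ℤ))
    simp
  have hn : M.Normal := by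
    refine normal_of_gen hgen ?_ ?_
    · exact (le_iInf fun i => cj_norm hSn (g ^ i)).trans (Subgroup.iInf_normalizer_le_normalizer_iSup _)
    · rw [← cj_self_iff]
      have key : ∀ j : ℤ, MulAut.conj (g ^ j) • M ≤ M := by
        intro j
        rw [Subgroup.pointwise_smul_subset_iff]
        refine iSup_le fun i => ?_
        rw [← Subgroup.pointwise_smul_subset_iff, smul_smul, ← map_mul, ← zpow_add]
        exact le_iSup (fun i : ℤ => MulAut.conj (g ^ i) • S) (j + i)
      refine le_antisymm (by simpa using key 1) ?_
      have := key (-1)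
      rw [Subgroup.pointwise_smul_subset_iff] at this
      simpa using this
  rcases hmin M hn (iSup_le fun i => cj_le hSN _) with h | h
  · exact absurd (le_bot_iff.1 (hle.trans h.le)) hS
  · exact h.ge

theorem S_perf {N S : Subgroup P} {g : P} [Finite P] [hN : N.Normal] (hgen : N ⊔ Subgroup.zpowers g = ⊤)
    (hmin : ∀ K : Subgroup P, K.Normal → K ≤ N → K = ⊥ ∨ K = N)
    (hS : S ≠ ⊥) (hSN : S ≤ N) (hSn : N ≤ Subgroup.normalizer (S : Set P))
    (hSmin : ∀ K : Subgroup P, K ≤ S → N ≤ Subgroup.normalizer (K : Set P) → K = ⊥ ∨ K = S)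
    (hcen : ∀ x : P, (∀ n ∈ N, x * n = n * x) → x = 1) : S ≤ ⁅S, S⁆ := by
  have h1 : ⁅S, S⁆ ≤ S := Subgroup.commutator_le_self S
  rcases hSmin ⁅S, S⁆ h1 (fun n hn => by
    rw [Subgroup.mem_normalizer_iff_map_conj_eq]
    have := Subgroup.mem_normalizer_iff_map_conj_eq.1 (hSn hn)
    have h2 := Subgroup.map_commutator S S ((MulAut.conj n : P ≃* P) : P →* P)
    rw [h2, this]) with h | h
  · exfalso
    apply hS
    rw [Subgroup.commutator_eq_bot_iff_le_centralizer] at h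
    rw [eq_bot_iff]
    intro s hs
    rw [Subgroup.mem_bot]
    apply hcen
    have : N ≤ Subgroup.centralizer {s} := by
      refine (cj_sup hgen hmin hS hSN hSn).trans (iSup_le fun i t ht => ?_)
      rw [Subgroup.mem_centralizer_singleton_iff]
      rcases cj_comm hSN hSn hSmin (g ^ i) with h3 | h3
      · rw [h3] at ht
        exact (Subgroup.mem_centralizer_iff.1 (h ht) s hs).symm
      · exact (h3 s hs t ht).symm
    intro n hn
    exact (Subgroup.mem_centralizer_singleton_iff.1 (this hn)).symm
  · exact h.ge

variable {V : Type} [AddCommGroup V] [Module ℂ V] {ρ : P → Module.End ℂ V}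

theorem env_res (T S : Subgroup P) (hST : S ≤ T) : env (fun t : T => ρ t) (S.subgroupOf T) = env ρ S := by
  unfold env
  congr 1
  ext a
  constructor
  · rintro ⟨t, ht, rfl⟩
    exact ⟨t, ht, rfl⟩
  · rintro ⟨s, hs, rfl⟩
    exact ⟨⟨s, hST hs⟩, hs, rfl⟩

theorem ftrick (h : PR ρ) {S : Subgroup P} (hS : S ≤ ⁅S, S⁆) (g : P) (k : ℕ) (hk0 : 1 ≤ k)
    (hk : ∀ i, 0 < i → i < k → ∀ s ∈ S, ∀ t ∈ MulAut.conj (g ^ i) • S, s * t = t * s)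
    (u : (Module.End ℂ V)ˣ) (hu : ρ g = u) {x y : Module.End ℂ V} (hx : x ∈ env ρ S) (hy : y ∈ env ρ S) :
    LinearMap.trace ℂ V (x * y * u) = LinearMap.trace ℂ V (y * (↑(u ^ k) * x * ↑(u ^ k)⁻¹) * u) := by
  have comm : ∀ i, 0 < i → i < k → y * (↑(u ^ i) * x * ↑(u ^ i)⁻¹) = (↑(u ^ i) * x * ↑(u ^ i)⁻¹) * y := by
    intro i h1 h2
    have e1 : x * (↑(u ^ i)⁻¹ * y * ↑(u ^ i)) = (↑(u ^ i)⁻¹ * y * ↑(u ^ i)) * x := by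
      refine env_comm (fun s hs => ?_) hx
      have e2 : y * ρ (g ^ i * s * (g ^ i)⁻¹) = ρ (g ^ i * s * (g ^ i)⁻¹) * y := by
        refine env_comm (fun s' hs' => ?_) hy
        exact perfcomm h hS (fun z hz => (hk i h1 h2 z hz _ (cj_mem hs)).symm) s' hs'
      obtain ⟨c, hc, e3⟩ := h.conj (g ^ i) s
      obtain ⟨d, hd, e4⟩ := h.pow g i
      rw [hu, ← Units.val_pow_eq_pow_val] at e4
      have e5 : (↑(u ^ i) : Module.End ℂ V) * ρ s = c • (ρ (g ^ i * s * (g ^ i)⁻¹) * ↑(u ^ i)) := by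
        rw [e4, smul_mul_assoc, e3, mul_smul_comm, smul_comm]
      generalize u ^ i = w at *
      generalize ρ (g ^ i * s * (g ^ i)⁻¹) = r at *
      apply w.isUnit.mul_right_injective
      show (w : Module.End ℂ V) * (ρ s * (↑w⁻¹ * y * ↑w)) = w * (↑w⁻¹ * y * ↑w * ρ s)
      have l1 : (w : Module.End ℂ V) * (ρ s * (↑w⁻¹ * y * ↑w)) = (w * ρ s) * ↑w⁻¹ * (y * ↑w) := by
        simp only [mul_assoc]
      have l2 : (w : Module.End ℂ V) * (↑w⁻¹ * y * ↑w * ρ s) = y * (w * ρ s) := by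
        simp only [← mul_assoc, Units.mul_inv, one_mul]
      rw [l1, l2, e5, smul_mul_assoc, smul_mul_assoc, mul_smul_comm, ← mul_assoc y, e2]
      simp [mul_assoc]
    generalize u ^ i = w at *
    have := congrArg (fun a => (w : Module.End ℂ V) * a * ↑w⁻¹) e1
    simp only [mul_assoc, Units.mul_inv, mul_one] at this
    simp only [← mul_assoc, Units.mul_inv, one_mul] at this
    simp only [mul_assoc] at this ⊢
    exact this.symm
  have step : ∀ i, i < k → LinearMap.trace ℂ V (x * y * u) =
      LinearMap.trace ℂ V (y * (↑(u ^ (i + 1)) * x * ↑(u ^ (i + 1))⁻¹) * u) := by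
    intro i
    have e0 : ∀ i, (↑(u ^ (i + 1)) * x * ↑(u ^ (i + 1))⁻¹ * u : Module.End ℂ V) =
      u * (↑(u ^ i) * x * ↑(u ^ i)⁻¹) := by
      intro i
      have e1 : ((u ^ (i + 1))⁻¹ * u : (Module.End ℂ V)ˣ) = (u ^ i)⁻¹ := by rw [pow_succ']; group
      rw [mul_assoc, ← Units.val_mul, e1, pow_succ', Units.val_mul]
      simp only [mul_assoc]
    induction i with
    | zero =>
      intro _
      rw [mul_assoc y, e0, mul_assoc x, LinearMap.trace_mul_comm]
      simp [mul_assoc]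
    | succ i ih =>
      intro hi
      rw [ih (by omega), comm (i + 1) (by omega) hi, mul_assoc y, e0 (i + 1), mul_assoc _ y,
        LinearMap.trace_mul_comm]
      simp only [mul_assoc]
  have := step (k - 1) (by omega)
  rwa [Nat.sub_add_cancel hk0] at this
end kge2

open scoped Pointwise commutatorElement
section nonab

theorem trace_one_ne {P V : Type} [Group P] [AddCommGroup V] [Module ℂ V] [FiniteDimensional ℂ V] [Nontrivial V]
    {ρ : P → Module.End ℂ V} (h : PR ρ) : LinearMap.trace ℂ V (ρ 1) ≠ 0 := by
  obtain ⟨c, hc, e⟩ := h.one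
  rw [e, map_smul, LinearMap.trace_one, smul_eq_mul]
  exact mul_ne_zero hc (by exact_mod_cast (Module.finrank_pos (R := ℂ) (M := V)).ne')

theorem quot_bound {n : ℕ} (ih : WIH n) {Q U : Type} [Group Q] [Finite Q] [AddCommGroup U] [Module ℂ U]
    [FiniteDimensional ℂ U] {σ : Q → Module.End ℂ U} (h : PR σ) (hi : Irr σ) (hn : Nat.card Q < n)
    (S : Subgroup Q) [S.Normal] (γ : Q) (hgen : S ⊔ Subgroup.zpowers γ = ⊤)
    (htr : LinearMap.trace ℂ U (σ γ) ≠ 0) (m : ℕ) (hm : ∃ s ∈ S, Scal (σ (s⁻¹ * γ ^ m)))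
    (ho : ∀ j : ℕ, Scal (σ (γ ^ j)) → γ ^ j = 1) :
    orderOf γ * Module.finrank ℂ U ∣ Nat.card S * m := by
  have := hi.1
  set K := h.ker with hK
  have : K.Normal := h.ker_normal
  have h1 := ih.quot h hi K (fun k hk => hk)
    (lt_of_le_of_lt (Nat.card_le_card_of_surjective _ (QuotientGroup.mk_surjective (s := K))) hn) γ htr
  have h2 : orderOf γ ∣ orderOf (QuotientGroup.mk γ : Q ⧸ K) := by
    rw [orderOf_dvd_iff_pow_eq_one]
    apply ho
    rw [← h.mem_ker, ← hK, ← QuotientGroup.eq_one_iff, QuotientGroup.mk_pow, pow_orderOf_eq_one]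
  set S' : Subgroup (Q ⧸ K) := S.map (QuotientGroup.mk' K) with hS'
  have : S'.Normal := Subgroup.Normal.map inferInstance _ (QuotientGroup.mk'_surjective K)
  have h3 : S' ⊔ Subgroup.zpowers (QuotientGroup.mk γ : Q ⧸ K) = ⊤ := by
    have := congrArg (Subgroup.map (QuotientGroup.mk' K)) hgen
    rw [Subgroup.map_sup, MonoidHom.map_zpowers, Subgroup.map_top_of_surjective _ (QuotientGroup.mk'_surjective K)] at this
    exact this
  have h4 := card_sup S' (QuotientGroup.mk γ : Q ⧸ K)
  rw [h3, Subgroup.card_top] at h4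
  have h5 : Nat.card S' ∣ Nat.card S := Subgroup.card_map_dvd S (QuotientGroup.mk' K)
  have h6 : orderOf (QuotientGroup.mk (QuotientGroup.mk γ : Q ⧸ K) : (Q ⧸ K) ⧸ S') ∣ m := by
    rw [orderOf_dvd_iff_pow_eq_one, ← QuotientGroup.mk_pow, QuotientGroup.eq_one_iff, ← QuotientGroup.mk_pow]
    obtain ⟨s, hs, hs'⟩ := hm
    refine ⟨s, hs, ?_⟩
    show (QuotientGroup.mk s : Q ⧸ K) = QuotientGroup.mk (γ ^ m)
    rw [QuotientGroup.eq]
    exact hs'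
  calc orderOf γ * Module.finrank ℂ U ∣ orderOf (QuotientGroup.mk γ : Q ⧸ K) * Module.finrank ℂ U :=
        Nat.mul_dvd_mul_right h2 _
    _ ∣ _ := h1
    _ = _ := h4
    _ ∣ _ := Nat.mul_dvd_mul h5 h6

variable {P V : Type} [Group P] [AddCommGroup V] [Module ℂ V] {ρ : P → Module.End ℂ V}

theorem subgroupOf_perf {S T : Subgroup P} (hST : S ≤ T) (hS : S ≤ ⁅S, S⁆) :
    S.subgroupOf T ≤ ⁅S.subgroupOf T, S.subgroupOf T⁆ := by
  have e : (S.subgroupOf T).map T.subtype = S := by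
    rw [Subgroup.subgroupOf_map_subtype, inf_eq_left.2 hST]
  rw [← Subgroup.map_le_map_iff_of_injective T.subtype_injective, Subgroup.map_commutator, e]
  exact hS

theorem sig_trace {S T : Subgroup P} [FiniteDimensional ℂ V] (h : PR ρ) (hST : S ≤ T) (hS : S ≤ ⁅S, S⁆) (g : P) (k : ℕ) (hk0 : 1 ≤ k)
    (hk : ∀ i, 0 < i → i < k → ∀ s ∈ S, ∀ t ∈ MulAut.conj (g ^ i) • S, s * t = t * s)
    (hg : LinearMap.trace ℂ V (ρ g) ≠ 0) (hγ : g ^ k ∈ T)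
    (D : Dec (fun t : T => ρ t) (S.subgroupOf T)) : LinearMap.trace ℂ _ (D.σ ⟨g ^ k, hγ⟩) ≠ 0 := by
  obtain ⟨u, hu⟩ := h.isUnit g
  set γ : T := ⟨g ^ k, hγ⟩ with hγd
  obtain ⟨s, hs⟩ := D.unit γ
  have hmem : ∀ b, D.ι b ∈ env ρ S := fun b => by rw [← env_res T S hST]; exact D.ι_mem b
  have e1 : ∀ b, (↑(u ^ k) : Module.End ℂ V) * D.ι b * ↑(u ^ k)⁻¹ = D.ι (↑s * b * ↑s⁻¹) := by
    intro b
    rw [Units.mul_inv_eq_iff_eq_mul]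
    obtain ⟨c, hc, e⟩ := h.pow g k
    have e' : (↑(u ^ k) : Module.End ℂ V) = c • (D.ι s * D.τ₀ γ) := by
      rw [Units.val_pow_eq_pow_val, hu, e, hs, ← D.fac' γ]
    rw [e', smul_mul_assoc, mul_assoc, D.com', ← mul_assoc, ← map_mul, mul_smul_comm, ← mul_assoc, ← map_mul]
    simp [mul_assoc]
  let G : EU D.n →ₗ[ℂ] ℂ := (LinearMap.trace ℂ V) ∘ₗ (LinearMap.mulRight ℂ (u : Module.End ℂ V)) ∘ₗ
    D.ι.toLinearMap ∘ₗ (LinearMap.mulRight ℂ (↑s⁻¹ : EU D.n))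
  have hG : ∀ a, G a = LinearMap.trace ℂ V (D.ι (a * ↑s⁻¹) * u) := fun a => rfl
  have := tr_unique G (fun a b => by
    rw [hG, hG, mul_assoc, map_mul D.ι a, ftrick h hS g k hk0 hk u hu.symm (hmem _) (hmem _), e1, ← map_mul D.ι]
    simp [mul_assoc]) D.z s
  rw [hG, Units.mul_inv, map_one, one_mul, hu] at this
  intro h0
  rw [← hs] at h0
  rw [h0, zero_mul] at this
  exact hg this

theorem nonab_case [Finite P] [FiniteDimensional ℂ V] (ih : WIH (Nat.card P)) (h : PR ρ)
    (N : Subgroup P) [hNn : N.Normal]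
    (hmin : ∀ K : Subgroup P, K.Normal → K ≤ N → K = ⊥ ∨ K = N)
    (hi : Irr (fun x : N => ρ x)) (hf : ∀ x, Scal (ρ x) → x = 1) (g : P)
    (hg : LinearMap.trace ℂ V (ρ g) ≠ 0)
    (hgen : N ⊔ Subgroup.zpowers g = ⊤) (hperf : N ≤ ⁅N, N⁆) (S : Subgroup P)
    (hS : S ≠ ⊥) (hSN : S ≤ N) (hSn : N ≤ Subgroup.normalizer (S : Set P))
    (hSmin : ∀ K : Subgroup P, K ≤ S → N ≤ Subgroup.normalizer (K : Set P) → K = ⊥ ∨ K = S)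
    (hne : S ≠ N) :
    orderOf g * Module.finrank ℂ V ∣ Nat.card P := by
  have := hi.1
  have hcen : ∀ x : P, (∀ n ∈ N, x * n = n * x) → x = 1 := fun x hx =>
    hf x (hi.schur fun n => perfcomm h hperf hx n n.2)
  have hSp := S_perf hgen hmin hS hSN hSn hSmin hcen
  have hdich := cj_comm hSN hSn hSmin
  have hsup := cj_sup hgen hmin hS hSN hSn
  set T := Subgroup.normalizer (S : Set P) with hT
  have hST : S ≤ T := Subgroup.le_normalizer
  set k := MulAction.period (MulAut.conj g) S with hk
  have hkd : ∀ j : ℕ, g ^ j ∈ T ↔ k ∣ j := by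
    intro j
    rw [hT, ← cj_self_iff, map_pow, MulAction.pow_smul_eq_iff_period_dvd]
  have hgT : g ∉ T := by
    intro hgT
    have : S.Normal := normal_of_gen hgen hSn hgT
    rcases hmin S this hSN with h1 | h1
    · exact hS h1
    · exact hne h1
  have hTt : T ≠ ⊤ := fun h => hgT (by rw [h]; trivial)
  have hko : k ∣ orderOf g := by rw [← hkd, pow_orderOf_eq_one]; exact one_mem _
  have hk0 : 0 < k := Nat.pos_of_dvd_of_pos hko (orderOf_pos g)
  have hkc : ∀ i, 0 < i → i < k → ∀ s ∈ S, ∀ t ∈ MulAut.conj (g ^ i) • S, s * t = t * s := by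
    intro i h1 h2
    refine (hdich (g ^ i)).resolve_left fun h3 => ?_
    rw [cj_self_iff, ← hT, hkd] at h3
    exact absurd (Nat.le_of_dvd h1 h3) (by omega)
  have hγ : g ^ k ∈ T := (hkd k).2 dvd_rfl
  set γ : T := ⟨g ^ k, hγ⟩ with hγd
  have hρT : PR (fun t : T => ρ t) := h.restrict T
  have hiT : Irr (fun t : T => ρ t) := hi.of_le fun W hW x w hw => hW ⟨x, hSn x.2⟩ w hw
  set ST := S.subgroupOf T with hSTd
  have hSTn : ST.Normal := Subgroup.normal_in_normalizer
  -- the decomposition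
  have hD : Nonempty (Dec (fun t : T => ρ t) ST) := by
    rcases wedd hρT hiT ST with ⟨n, hn, ⟨φ⟩⟩ | ⟨e, he, h0, h1, hc, -⟩
    · exact Dec.exists hρT hn φ
    · exfalso
      have hmem : e.1 ∈ env ρ S := by rw [← env_res T S hST]; exact e.2
      have hsc : Scal e.1 := by
        refine hi.schur fun x => ?_
        have hle : N ≤ h.comm e.1 := by
          refine hsup.trans (iSup_le fun i t ht => ?_)
          rw [h.mem_comm]
          rcases hdich (g ^ i) with h3 | h3
          · rw [h3] at ht
            have := hc ⟨ρ t, mem_env (ρ := fun t : T => ρ t) (x := ⟨t, hST ht⟩) ht⟩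
            exact (congrArg Subtype.val this).symm
          · refine (env_comm (fun s hs => ?_) hmem).symm
            exact perfcomm h hSp (fun s' hs' => (h3 s' hs' t ht).symm) s hs
        exact hle x.2
      obtain ⟨a, ha⟩ := hsc
      have haa : a * a = a := by
        have h5 : e.1 * e.1 = e.1 := congrArg Subtype.val he
        rw [ha] at h5
        have h5 : (a * a) • (1 : Module.End ℂ V) = a • 1 := by
          simpa [smul_smul] using h5
        exact smul_left_injective ℂ (one_ne_zero) h5
      rcases eq_or_ne a 0 with h6 | h6
      · exact h0 (Subtype.ext (by rw [ha, h6, zero_smul]; rfl))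
      · have : a = 1 := mul_left_cancel₀ h6 (by rw [haa, mul_one])
        exact h1 (Subtype.ext (by rw [ha, this, one_smul]; rfl))
  obtain ⟨D⟩ := hD
  have hσ := D.PRσ hρT
  have hiσ := D.irrσ hρT
  have := D.nontriv
  have htr : LinearMap.trace ℂ _ (D.σ γ) ≠ 0 := sig_trace h hST hSp g k hk0 hkc hg hγ D
  -- the part on `S⟨γ⟩`
  set Q : Subgroup T := ST ⊔ Subgroup.zpowers γ with hQ
  have hγQ : γ ∈ Q := (le_sup_right : _ ≤ Q) (Subgroup.mem_zpowers γ)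
  have hSQ : ST ≤ Q := le_sup_left
  set m := orderOf (QuotientGroup.mk (g ^ k) : P ⧸ N) with hm
  have hγm : (g ^ k) ^ m ∈ N := by
    rw [← QuotientGroup.eq_one_iff, QuotientGroup.mk_pow, hm, pow_orderOf_eq_one]
  have hB : orderOf (g ^ k) * Module.finrank ℂ (Fin D.n → ℂ) ∣ Nat.card S * m := by
    have hfin : Nat.card (ST.subgroupOf Q) = Nat.card S := by
      rw [Nat.card_congr (Subgroup.subgroupOfEquivOfLe hSQ).toEquiv,
        Nat.card_congr (Subgroup.subgroupOfEquivOfLe hST).toEquiv]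
    have hQg : ST.subgroupOf Q ⊔ Subgroup.zpowers (⟨γ, hγQ⟩ : Q) = ⊤ := by
      apply Subgroup.map_injective Q.subtype_injective
      rw [Subgroup.map_sup, Subgroup.subgroupOf_map_subtype, inf_eq_left.2 hSQ, MonoidHom.map_zpowers,
        ← MonoidHom.range_eq_map, Subgroup.range_subtype]
      rfl
    have key := quot_bound ih (hσ.restrict Q) (hiσ.of_le fun W hW x w hw => hW ⟨x, hSQ x.2⟩ w hw)
      (lt_of_le_of_lt (Subgroup.card_le_card_group Q) (card_lt_of_ne_top T hTt))
      (ST.subgroupOf Q) ⟨γ, hγQ⟩ hQg htr m ?_ ?_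
    · rw [hfin, ← Subgroup.orderOf_coe, ← Subgroup.orderOf_coe] at key
      exact key
    · have h1 : N ≤ S ⊔ Subgroup.centralizer (S : Set P) := by
        refine hsup.trans (iSup_le fun i => ?_)
        rcases hdich (g ^ i) with h3 | h3
        · rw [h3]; exact le_sup_left
        · refine le_trans (fun t ht => ?_) le_sup_right
          rw [Subgroup.mem_centralizer_iff]
          exact fun s hs => h3 s hs t ht
      have h2 := h1 hγm
      rw [← SetLike.mem_coe, Subgroup.coe_mul_of_right_le_normalizer_left S _
        (Subgroup.centralizer_le_normalizer _)] at h2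
      obtain ⟨s, hs, c, hc, hsc⟩ := h2
      have hsc' : s * c = (g ^ k) ^ m := hsc
      have hs : s ∈ S := hs
      refine ⟨⟨⟨s, hST hs⟩, hSQ hs⟩, hs, ?_⟩
      show Scal (D.σ (⟨s, hST hs⟩⁻¹ * γ ^ m))
      refine hiσ.schur fun y => ?_
      refine perfcomm hσ (subgroupOf_perf hST hSp) (fun z hz => Subtype.ext ?_) y y.2
      show s⁻¹ * (g ^ k) ^ m * z = z * (s⁻¹ * (g ^ k) ^ m)
      rw [← hsc', inv_mul_cancel_left]
      exact (Subgroup.mem_centralizer_iff.1 hc z hz).symm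
    · intro j hj
      have hj : Scal (D.σ (γ ^ j)) := hj
      have h1 : ∀ s ∈ S, (g ^ k) ^ j * s = s * (g ^ k) ^ j := by
        intro s hs
        set s' : T := ⟨s, hST hs⟩ with hs'
        have h2 : γ ^ j * s' * (γ ^ j)⁻¹ * s'⁻¹ ∈ ST :=
          mul_mem (hSTn.conj_mem s' hs _) (inv_mem (show s' ∈ ST from hs))
        have h3 : Scal (D.σ (γ ^ j * s' * (γ ^ j)⁻¹ * s'⁻¹)) := by
          rw [← hσ.mem_ker] at hj ⊢
          rw [mul_assoc, mul_assoc, ← mul_assoc s']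
          exact mul_mem hj (hσ.ker_normal.conj_mem _ (inv_mem hj) _)
        have h4 := hf _ (D.scal h3 (D.tau_scal_N hρT h2))
        have h5 := mul_inv_eq_one.1 h4
        exact mul_inv_eq_iff_eq_mul.1 h5
      apply Subtype.ext; apply Subtype.ext
      show (g ^ k) ^ j = 1
      apply hcen
      have : N ≤ Subgroup.centralizer {(g ^ k) ^ j} := by
        refine hsup.trans (iSup_le fun i t ht => ?_)
        rw [Subgroup.mem_centralizer_singleton_iff]
        rw [mem_cj] at ht
        have h2 := h1 _ ht
        have h3 : Commute (g ^ i) ((g ^ k) ^ j) := by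
          rw [← pow_mul, ← zpow_natCast, ]
          exact Commute.zpow_zpow_self g _ _
        have h4 : Commute ((g ^ i)⁻¹ * t * g ^ i) ((g ^ k) ^ j) := h2.symm
        have h5 : t = g ^ i * ((g ^ i)⁻¹ * t * g ^ i) * (g ^ i)⁻¹ := by group
        rw [h5]
        exact (h3.mul_left h4).mul_left h3.inv_left
      exact fun n hn => (Subgroup.mem_centralizer_singleton_iff.1 (this hn)).symm
  -- the complementary part
  have hW : Module.finrank ℂ D.W * Nat.card S ∣ Nat.card N := by
    set NT := N.subgroupOf T with hNT
    have hle : ST ≤ NT := fun x hx => hSN hx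
    have hiN : Irr (fun x : NT => D.τ x) := by
      refine D.irrτ (NT : Set T) ?_
      exact hi.of_le fun W hW x w hw => hW ⟨⟨x, hSn x.2⟩, x.2⟩ w hw
    have := hiN.1
    have hτ := (D.PRτ hρT).restrict NT
    have hcN : Nat.card NT = Nat.card N := Nat.card_congr (Subgroup.subgroupOfEquivOfLe hSn).toEquiv
    have hcS : Nat.card (ST.subgroupOf NT) = Nat.card S := by
      rw [Nat.card_congr (Subgroup.subgroupOfEquivOfLe hle).toEquiv,
        Nat.card_congr (Subgroup.subgroupOfEquivOfLe hST).toEquiv]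
    have hN1 : N ≠ ⊤ := fun h => hTt (top_le_iff.1 (h ▸ hSn))
    have key := ih.quot hτ hiN (ST.subgroupOf NT) (fun x hx => D.tau_scal_N hρT hx)
      (lt_of_le_of_lt (Nat.card_le_card_of_surjective _ (QuotientGroup.mk_surjective (s := ST.subgroupOf NT)))
        (by rw [hcN]; exact card_lt_of_ne_top N hN1)) 1 (trace_one_ne (D.PRτ hρT))
    rw [QuotientGroup.mk_one, orderOf_one, one_mul] at key
    rw [← hcN, Subgroup.card_eq_card_quotient_mul_card_subgroup (ST.subgroupOf NT), hcS]
    exact Nat.mul_dvd_mul_right key _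
  -- arithmetic
  have e1 : orderOf g = k * orderOf (g ^ k) := by
    rw [orderOf_pow_of_dvd hk0.ne' hko, Nat.mul_div_cancel' hko]
  have hkN : k ∣ orderOf (QuotientGroup.mk g : P ⧸ N) := by
    rw [← hkd]
    apply hSn
    rw [← QuotientGroup.eq_one_iff, QuotientGroup.mk_pow, pow_orderOf_eq_one]
  have e2 : orderOf (QuotientGroup.mk g : P ⧸ N) = k * m := by
    rw [hm, QuotientGroup.mk_pow, orderOf_pow_of_dvd hk0.ne' hkN, Nat.mul_div_cancel' hkN]
  have e3 := card_sup N g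
  rw [hgen, Subgroup.card_top, e2] at e3
  rw [e3, e1, D.dim_eq]
  have hSpos : 0 < Nat.card S := Nat.card_pos
  refine Nat.dvd_of_mul_dvd_mul_left hSpos ?_
  have := Nat.mul_dvd_mul_left k (Nat.mul_dvd_mul hB hW)
  convert this using 1 <;> ring
end nonab

section bridge
open CategoryTheory

theorem simple_of_comm {G V : Type} [Group G] [Finite G] [AddCommGroup V] [Module ℂ V]
    [FiniteDimensional ℂ V] [Nontrivial V] (ρ : Representation ℂ G V)
    (hs : ∀ a : Module.End ℂ V, (∀ x, ρ x * a = a * ρ x) → Scal a) :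
    Simple (FDRep.of ρ) := by
  rw [FDRep.simple_iff_end_is_rank_one]
  have hne : (𝟙 (FDRep.of ρ)) ≠ 0 := by
    intro h0
    obtain ⟨v, hv⟩ := exists_ne (0 : V)
    have := congrArg (fun f : FDRep.of ρ ⟶ FDRep.of ρ => f.hom.hom.hom v) h0
    exact hv this
  rw [finrank_eq_one_iff_of_nonzero' _ hne]
  intro f
  obtain ⟨c, hc⟩ := hs f.hom.hom.hom (fun x => LinearMap.ext fun v => by
    have := congrArg (fun f => f.hom.hom v) (f.comm x)
    exact this.symm)
  refine ⟨c, ?_⟩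
  apply Action.Hom.ext
  ext v
  exact (LinearMap.congr_fun hc v).symm

theorem irr_of_simple {G : Type} [Group G] (V : FDRep ℂ G) (hs : Simple V) :
    Irr (fun g => V.ρ g : G → Module.End ℂ V) := by
  have hnt : Nontrivial V := by
    by_contra hn
    rw [not_nontrivial_iff_subsingleton] at hn
    apply id_nonzero V
    apply Action.Hom.ext
    ext v
    exact Subsingleton.elim (α := V) _ _
  refine ⟨hnt, fun W hW => ?_⟩
  let r : Representation ℂ G W :=
    { toFun := fun g => (V.ρ g).restrict (hW g)
      map_one' := by ext w; simp
      map_mul' := fun x y => by ext w; simp }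
  let f : FDRep.of r ⟶ V :=
    ⟨InducedCategory.homMk (ModuleCat.ofHom W.subtype), fun g => by
      ext w; rfl⟩
  have hf : ∀ w : W, f.hom.hom.hom w = (w : V) := fun w => rfl
  have hm : Mono f := by
    apply (Action.forget (FGModuleCat ℂ) G).mono_of_mono_map
    apply ConcreteCategory.mono_of_injective
    exact Subtype.val_injective
  by_cases h0 : f = 0
  · left
    rw [eq_bot_iff]
    intro w hw
    have := congrArg (fun f : FDRep.of r ⟶ V => f.hom.hom.hom (⟨w, hw⟩ : W)) h0
    exact this
  · right
    have := isIso_of_mono_of_nonzero h0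
    rw [eq_top_iff]
    intro v _
    have h1 := congrArg (fun f : V ⟶ V => f.hom.hom.hom v) (IsIso.inv_hom_id f)
    have h2 : ((inv f).hom.hom.hom v : W).1 = v := h1
    rw [← h2]
    exact ((inv f).hom.hom.hom v : W).2
end bridge

open scoped Pointwise commutatorElement
section cover

theorem comm_of_quot {H : Type} [Group H] {L : Subgroup H} [L.Normal] {h : H}
    (hgen : L ⊔ Subgroup.zpowers h = ⊤) : commutator H ≤ L := by
  have hx : ∀ x : H, ∃ i : ℤ, (QuotientGroup.mk x : H ⧸ L) = (QuotientGroup.mk h) ^ i := by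
    intro x
    have : x ∈ L ⊔ Subgroup.zpowers h := by rw [hgen]; trivial
    rw [Subgroup.mem_sup_of_normal_left] at this
    obtain ⟨l, hl, z, ⟨i, rfl⟩, rfl⟩ := this
    refine ⟨i, ?_⟩
    rw [QuotientGroup.mk_mul, (QuotientGroup.eq_one_iff l).2 hl, one_mul]
    rfl
  rw [commutator_def, Subgroup.commutator_le]
  intro x _ y _
  rw [← QuotientGroup.eq_one_iff]
  obtain ⟨i, hi⟩ := hx x
  obtain ⟨j, hj⟩ := hx y
  have : (QuotientGroup.mk ⁅x, y⁆ : H ⧸ L) = ⁅(QuotientGroup.mk x : H ⧸ L), (QuotientGroup.mk y : H ⧸ L)⁆ := rfl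
  rw [this, hi, hj, commutatorElement_eq_one_iff_mul_comm, ← zpow_add, ← zpow_add, add_comm]

theorem cover_facts {H P : Type} [Group H] [Group P] [Finite H] (π : H →* P) (hπ : Function.Surjective π)
    (hK : π.ker ≤ Subgroup.center H) (L : Subgroup H) [L.Normal] (hL : L ≤ ⁅L, L⁆)
    (N : Subgroup P) (hLN : L.map π = N) (hs : IsSimpleGroup N)
    (hc : ∀ x : P, (∀ n ∈ N, x * n = n * x) → x = 1) (h : H)
    (hgen : L ⊔ Subgroup.zpowers h = ⊤) (ha : ∀ i : ℤ, π h ^ i ∈ N → h ^ i ∈ L) :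
    IsQuasisimple ↥(commutator H) ∧
    Subgroup.map (commutator H).subtype (Subgroup.center ↥(commutator H)) = Subgroup.center H ∧
    commutator H ⊔ Subgroup.zpowers h = ⊤ ∧
    orderOf (QuotientGroup.mk h : H ⧸ Subgroup.center H) = orderOf (π h) ∧
    (Subgroup.center H).index = Nat.card P := by
  have e : commutator H = L := le_antisymm (comm_of_quot hgen)
    (hL.trans (Subgroup.commutator_mono le_top le_top))
  have hZ : Subgroup.center H = π.ker := by
    refine le_antisymm (fun x hx => ?_) hK
    refine hc _ fun n _ => ?_
    obtain ⟨y, rfl⟩ := hπ n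
    rw [← map_mul, ← map_mul, Subgroup.mem_center_iff.1 hx y]
  have hZL : ∀ x : L, x ∈ Subgroup.center L ↔ π x = 1 := by
    intro x
    constructor
    · intro hx
      refine hc _ fun n hn => ?_
      rw [← hLN] at hn
      obtain ⟨y, hy, rfl⟩ := hn
      rw [← map_mul, ← map_mul]
      have := Subgroup.mem_center_iff.1 hx ⟨y, hy⟩
      exact congrArg π (congrArg Subtype.val this).symm
    · intro hx
      rw [Subgroup.mem_center_iff]
      intro y
      exact Subtype.ext (Subgroup.mem_center_iff.1 (hK hx) y)
  have hZle : π.ker ≤ L := by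
    intro x hx
    have hx' : x ∈ L ⊔ Subgroup.zpowers h := by rw [hgen]; trivial
    rw [Subgroup.mem_sup_of_normal_left] at hx'
    obtain ⟨l, hl, z, ⟨i, rfl⟩, rfl⟩ := hx'
    refine mul_mem hl (ha i ?_)
    have h1 : π l * π h ^ i = 1 := by
      have : π (l * h ^ i) = 1 := hx
      rwa [map_mul, map_zpow] at this
    rw [← inv_eq_iff_mul_eq_one.2 h1]
    exact inv_mem (hLN ▸ Subgroup.mem_map_of_mem π hl)
  refine ⟨?_, ?_, ?_, ?_, ?_⟩
  · rw [e]
    constructor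
    · rw [eq_top_iff]
      intro x _
      have h1 : (x : H) ∈ (commutator L).map L.subtype := by
        rw [Subgroup.map_subtype_commutator]; exact hL x.2
      obtain ⟨y, hy, hyx⟩ := h1
      rwa [← Subtype.ext (a1 := y) hyx]
    · let f : L →* N := (π.comp L.subtype).codRestrict N fun x => hLN ▸ Subgroup.mem_map_of_mem π x.2
      have hf : Function.Surjective f := by
        rintro ⟨n, hn⟩
        rw [← hLN] at hn
        obtain ⟨y, hy, rfl⟩ := hn
        exact ⟨⟨y, hy⟩, rfl⟩
      have hk : f.ker = Subgroup.center L := by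
        ext x
        rw [hZL, MonoidHom.mem_ker]
        exact Subtype.ext_iff
      exact ((QuotientGroup.quotientMulEquivOfEq hk).symm.trans
        (QuotientGroup.quotientKerEquivOfSurjective f hf)).isSimpleGroup
  · rw [e, hZ]
    ext x
    constructor
    · rintro ⟨y, hy, rfl⟩
      exact (hZL y).1 hy
    · intro hx
      exact ⟨⟨x, hZle hx⟩, (hZL _).2 hx, rfl⟩
  · rw [e, hgen]
  · apply orderOf_eq_orderOf_iff.2
    intro n
    rw [← QuotientGroup.mk_pow, QuotientGroup.eq_one_iff, hZ, MonoidHom.mem_ker, map_pow]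
  · rw [hZ, Subgroup.index_ker, MonoidHom.range_eq_top.2 hπ, Subgroup.card_top]
end cover

open scoped Pointwise commutatorElement
section simplecase
variable {P V : Type} [Group P] [AddCommGroup V] [Module ℂ V] {ρ : P → Module.End ℂ V}

/-- The group of pairs of an operator and a group element inducing it up to scalars. -/
def PR.gam (h : PR ρ) : Subgroup ((Module.End ℂ V)ˣ × P) where
  carrier := {p | ∃ c : ℂ, c ≠ 0 ∧ (p.1 : Module.End ℂ V) = c • ρ p.2}
  one_mem' := by
    obtain ⟨c, hc, e⟩ := h.one
    exact ⟨c⁻¹, inv_ne_zero hc, by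
      show (1 : Module.End ℂ V) = c⁻¹ • ρ 1
      rw [e, smul_smul, inv_mul_cancel₀ hc, one_smul]⟩
  mul_mem' := by
    rintro p q ⟨c, hc, e⟩ ⟨d, hd, e'⟩
    obtain ⟨b, hb, e2⟩ := h.mul p.2 q.2
    refine ⟨c * d * b, by simp [*], ?_⟩
    show (p.1 : Module.End ℂ V) * (q.1 : Module.End ℂ V) = _
    rw [e, e', smul_mul_smul_comm, e2, smul_smul]
    rfl
  inv_mem' := by
    rintro p ⟨c, hc, e⟩
    obtain ⟨b, hb, e2⟩ := h.inv p.2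
    refine ⟨c⁻¹ * b⁻¹, by simp [*], ?_⟩
    show ((p.1⁻¹ : (Module.End ℂ V)ˣ) : Module.End ℂ V) = (c⁻¹ * b⁻¹) • ρ p.2⁻¹
    rw [Units.inv_eq_of_mul_eq_one_right]
    rw [e, smul_mul_smul_comm, e2, smul_smul]
    convert one_smul ℂ (1 : Module.End ℂ V) using 2
    field_simp

theorem fin_aux [Finite P] [FiniteDimensional ℂ V] [Nontrivial V] (h : PR ρ) (m : ℕ) (hm : 0 < m) :
    Set.Finite {p : h.gam | (LinearMap.det (p.1.1 : Module.End ℂ V)) ^ m = 1} := by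
  have hd : 0 < Module.finrank ℂ V * m := Nat.mul_pos Module.finrank_pos hm
  have hfin : ∀ x : P, Set.Finite {a : Module.End ℂ V | ∃ c : ℂ, c ^ (Module.finrank ℂ V * m) =
      ((LinearMap.det (ρ x)) ^ m)⁻¹ ∧ a = c • ρ x} := by
    intro x
    have h1 : Set.Finite {c : ℂ | c ^ (Module.finrank ℂ V * m) = ((LinearMap.det (ρ x)) ^ m)⁻¹} := by
      refine (Polynomial.nthRoots (Module.finrank ℂ V * m)
        ((LinearMap.det (ρ x)) ^ m)⁻¹).toFinset.finite_toSet.subset ?_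
      intro c hc
      simpa [Polynomial.mem_nthRoots hd] using hc
    refine (h1.image (fun c => c • ρ x)).subset ?_
    rintro a ⟨c, hc, rfl⟩
    exact ⟨c, hc, rfl⟩
  have hU : Set.Finite (⋃ x : P, (fun a : Module.End ℂ V => (a, x)) ''
      {a : Module.End ℂ V | ∃ c : ℂ, c ^ (Module.finrank ℂ V * m) =
      ((LinearMap.det (ρ x)) ^ m)⁻¹ ∧ a = c • ρ x}) := Set.finite_iUnion fun x => (hfin x).image _
  refine Set.Finite.of_injOn (f := fun p : h.gam => ((p.1.1 : Module.End ℂ V), p.1.2)) ?_ ?_ hU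
  · rintro ⟨p, c, hc, e⟩ hp
    refine Set.mem_iUnion.2 ⟨p.2, (p.1 : Module.End ℂ V), ⟨c, ?_, e⟩, rfl⟩
    have hp : (LinearMap.det (p.1 : Module.End ℂ V)) ^ m = 1 := hp
    rw [e, LinearMap.det_smul, mul_pow, ← pow_mul] at hp
    exact eq_inv_of_mul_eq_one_left hp
  · intro p _ q _ hpq
    have h1 := Prod.ext_iff.1 hpq
    exact Subtype.ext (Prod.ext (Units.ext h1.1) h1.2)

theorem simple_case (C : Conjecture24) [Finite P] [FiniteDimensional ℂ V] (h : PR ρ)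
    (N : Subgroup P) [hNn : N.Normal] (hsimp : IsSimpleGroup N)
    (hi : Irr (fun x : N => ρ x)) (hf : ∀ x, Scal (ρ x) → x = 1) (g : P)
    (hg : LinearMap.trace ℂ V (ρ g) ≠ 0)
    (hgen : N ⊔ Subgroup.zpowers g = ⊤) (hperf : N ≤ ⁅N, N⁆) :
    orderOf g * Module.finrank ℂ V ∣ Nat.card P := by
  haveI := hi.1
  let π : h.gam →* P := (MonoidHom.snd _ _).comp h.gam.subtype
  let φ : h.gam →* (Module.End ℂ V)ˣ := (MonoidHom.fst _ _).comp h.gam.subtype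
  have hlift : ∀ x : P, ∃ p : h.gam, π p = x ∧ (φ p : Module.End ℂ V) = ρ x := by
    intro x
    obtain ⟨u, hu⟩ := h.isUnit x
    exact ⟨⟨(u, x), 1, one_ne_zero, by rw [one_smul]; exact hu⟩, rfl, hu⟩
  have hrel : ∀ p : h.gam, ∃ c : ℂ, c ≠ 0 ∧ (φ p : Module.End ℂ V) = c • ρ (π p) := fun p => p.2
  have hext : ∀ p q : h.gam, φ p = φ q → π p = π q → p = q := fun p q h1 h2 =>
    Subtype.ext (Prod.ext h1 h2)
  have hker : ∀ z : h.gam, π z = 1 → ∀ p, z * p = p * z := by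
    intro z hz p
    obtain ⟨c, hc, e⟩ := hrel z
    obtain ⟨d, hd, e'⟩ := h.one
    refine hext _ _ (Units.ext ?_) ?_
    · rw [map_mul, map_mul, Units.val_mul, Units.val_mul, e, hz, e']
      simp
    · rw [map_mul, map_mul, hz]; simp
  have hc : ∀ x : P, (∀ n ∈ N, x * n = n * x) → x = 1 := fun x hx =>
    hf x (hi.schur fun y => perfcomm h hperf hx y y.2)
  let GN : Subgroup h.gam := N.comap π
  let L : Subgroup h.gam := ⁅GN, GN⁆
  have hπ : Function.Surjective π := fun x => (hlift x).imp fun p hp => hp.1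
  have hLN : L.map π = N := by
    rw [Subgroup.map_commutator, Subgroup.map_comap_eq_self_of_surjective hπ]
    exact le_antisymm (Subgroup.commutator_le_right _ _) hperf
  have hLp : L ≤ ⁅L, L⁆ := by
    have hdec : ∀ x ∈ GN, ∃ l ∈ L, ∃ z, π z = 1 ∧ x = l * z := by
      intro x hx
      have : π x ∈ L.map π := by rw [hLN]; exact hx
      obtain ⟨l, hl, e⟩ := this
      exact ⟨l, hl, l⁻¹ * x, by rw [map_mul, map_inv, e, inv_mul_cancel], by group⟩
    refine Subgroup.commutator_le.2 fun x hx y hy => ?_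
    obtain ⟨l, hl, z, hz, rfl⟩ := hdec x hx
    obtain ⟨l', hl', z', hz', rfl⟩ := hdec y hy
    have e : ⁅l * z, l' * z'⁆ = ⁅l, l'⁆ := by
      have h1 := hker z hz
      have h2 := hker z' hz'
      calc ⁅l * z, l' * z'⁆ = l * (z * (l' * z')) * (z⁻¹ * l⁻¹) * (z'⁻¹ * l'⁻¹) := by
            rw [commutatorElement_def]; group
        _ = l * (l' * (z' * l⁻¹)) * (z'⁻¹ * l'⁻¹) := by rw [h1]; group
        _ = _ := by rw [h2, commutatorElement_def]; group
    rw [e]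
    exact Subgroup.commutator_mem_commutator hl hl'
  have hLdet : ∀ p ∈ L, LinearMap.det (φ p : Module.End ℂ V) = 1 := by
    let δ : h.gam →* ℂˣ := (Units.map (LinearMap.det : Module.End ℂ V →* ℂ)).comp φ
    have : L ≤ δ.ker := Subgroup.commutator_le.2 fun x _ y _ => by
      rw [MonoidHom.mem_ker, map_commutatorElement, commutatorElement_eq_one_iff_mul_comm, mul_comm]
    intro p hp
    exact congrArg Units.val (this hp)
  -- choose the lift of `g`
  set a := orderOf (QuotientGroup.mk g : P ⧸ N) with ha
  have ha0 : 0 < a := orderOf_pos _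
  obtain ⟨t, ht, hμ⟩ : ∃ t : h.gam, π t = g ∧ t ^ a ∈ L := by
    obtain ⟨q, hq, hq'⟩ := hlift g
    have h1 : g ^ a ∈ L.map π := by
      rw [hLN, ← QuotientGroup.eq_one_iff, QuotientGroup.mk_pow, pow_orderOf_eq_one]
    obtain ⟨l, hl, e⟩ := h1
    obtain ⟨c, hc0, hce⟩ := hrel (q ^ a)
    obtain ⟨d, hd0, hde⟩ := hrel l
    rw [map_pow, Units.val_pow_eq_pow_val, map_pow, hq] at hce
    rw [e] at hde
    obtain ⟨ν, hν⟩ := IsAlgClosed.exists_pow_nat_eq (d * c⁻¹) ha0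
    have hν0 : ν ≠ 0 := by
      rintro rfl
      rw [zero_pow ha0.ne'] at hν
      exact mul_ne_zero hd0 (inv_ne_zero hc0) hν.symm
    let s : (Module.End ℂ V)ˣ := Units.mk0 ν hν0 • φ q
    have hs : (s : Module.End ℂ V) = ν • ρ g := by rw [← hq']; rfl
    refine ⟨⟨(s, g), ν, hν0, hs⟩, rfl, ?_⟩
    refine (congrArg (· ∈ L) (hext _ l (Units.ext ?_) ?_)).mpr hl
    · rw [map_pow, Units.val_pow_eq_pow_val]
      show (s : Module.End ℂ V) ^ a = _
      rw [hs, hde, smul_pow, hν, ← hq']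
      rw [hce, smul_smul]
      congr 1
      field_simp
    · rw [map_pow, e]; rfl
  let H : Subgroup h.gam := L ⊔ Subgroup.zpowers t
  have hLH : L ≤ H := le_sup_left
  have htH : t ∈ H := le_sup_right (a := L) (Subgroup.mem_zpowers t)
  haveI : Finite H := by
    let δ : h.gam →* ℂˣ := (Units.map (LinearMap.det : Module.End ℂ V →* ℂ)).comp φ
    have h1 : H ≤ ((powMonoidHom a).comp δ).ker := by
      refine sup_le (fun p hp => ?_) ?_
      · rw [MonoidHom.mem_ker]
        have : δ p = 1 := Units.ext (hLdet p hp)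
        simp [this]
      · rw [Subgroup.zpowers_le, MonoidHom.mem_ker]
        have : δ (t ^ a) = 1 := Units.ext (hLdet _ hμ)
        simpa using this
    refine Set.Finite.to_subtype ((fin_aux h a ha0).subset fun p hp => ?_)
    exact congrArg Units.val (h1 hp)
  have key := cover_facts (π.comp H.subtype) (?_) (?_) (L.subgroupOf H) (subgroupOf_perf hLH hLp) N ?_ hsimp hc
    ⟨t, htH⟩ ?_ ?_
  · obtain ⟨k1, k2, k3, k4, k5⟩ := key
    let r : Representation ℂ H V := (Units.coeHom _).comp (φ.comp H.subtype)
    have hr : ∀ x : H, r x = (φ x : Module.End ℂ V) := fun x => rfl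
    have := C H k1 k2 (FDRep.of r) (simple_of_comm r ?_) ?_ ⟨t, htH⟩ ?_ k3
    · rw [k4, k5] at this
      have h2 : (π.comp H.subtype) ⟨t, htH⟩ = g := ht
      rw [h2] at this
      exact this
    · intro b hb
      refine hi.schur fun x => ?_
      have hx : (x : P) ∈ L.map π := by rw [hLN]; exact x.2
      obtain ⟨p, hp, e⟩ := hx
      obtain ⟨c, hc0, hce⟩ := hrel p
      have h3 := hb ⟨p, hLH hp⟩
      rw [hr] at h3
      simp only [hce, e] at h3
      rw [smul_mul_assoc, mul_smul_comm] at h3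
      exact smul_right_injective _ hc0 h3
    · rw [FDRep.of_ρ']
      refine (injective_iff_map_eq_one r).2 fun x hx => ?_
      rw [hr] at hx
      obtain ⟨c, hc0, hce⟩ := hrel x
      rw [hx] at hce
      have h4 : π x = 1 := hf _ ⟨c⁻¹, by rw [hce, smul_smul, inv_mul_cancel₀ hc0, one_smul]⟩
      refine Subtype.ext (hext _ _ (Units.ext ?_) ?_)
      · rw [hx]; rfl
      · rw [h4]; rfl
    · show LinearMap.trace ℂ V (φ t : Module.End ℂ V) ≠ 0
      obtain ⟨c, hc0, hce⟩ := hrel t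
      rw [hce, ht, map_smul, smul_eq_mul]
      exact mul_ne_zero hc0 hg
  · have h5 : H.map π = ⊤ := by
      rw [Subgroup.map_sup, hLN, MonoidHom.map_zpowers, ht, hgen]
    intro x
    have : x ∈ H.map π := by rw [h5]; trivial
    obtain ⟨p, hp, e⟩ := this
    exact ⟨⟨p, hp⟩, e⟩
  · intro x hx
    rw [Subgroup.mem_center_iff]
    intro y
    exact Subtype.ext (hker x hx y).symm
  · rw [← hLN]
    ext x
    constructor
    · rintro ⟨p, hp, rfl⟩
      exact ⟨p, hp, rfl⟩
    · rintro ⟨p, hp, rfl⟩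
      exact ⟨⟨p, hLH hp⟩, hp, rfl⟩
  · rw [eq_top_iff]
    rintro ⟨x, hx⟩ _
    have hx' : x ∈ L ⊔ Subgroup.zpowers t := hx
    rw [Subgroup.mem_sup_of_normal_left] at hx'
    obtain ⟨l, hl, z, ⟨i, rfl⟩, rfl⟩ := hx'
    have h6 : (⟨l, hLH hl⟩ : H) * ⟨t, htH⟩ ^ i ∈ L.subgroupOf H ⊔ Subgroup.zpowers ⟨t, htH⟩ :=
      Subgroup.mul_mem_sup hl (Subgroup.zpow_mem_zpowers _ _)
    exact h6
  · intro i hi'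
    have h7 : g ^ i ∈ N := by rw [← ht]; exact hi'
    rw [← QuotientGroup.eq_one_iff, QuotientGroup.mk_zpow, ← orderOf_dvd_iff_zpow_eq_one, ← ha] at h7
    obtain ⟨j, rfl⟩ := h7
    show t ^ ((a : ℤ) * j) ∈ L
    rw [zpow_mul, zpow_natCast]
    exact zpow_mem hμ j
end simplecase

open scoped Pointwise commutatorElement
section mainW
variable {P V : Type} [Group P] [AddCommGroup V] [Module ℂ V] {ρ : P → Module.End ℂ V}

theorem claimB (C : Conjecture24) [Finite P] [FiniteDimensional ℂ V] (ih : WIH (Nat.card P)) (h : PR ρ)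
    (N : Subgroup P) [hNn : N.Normal]
    (hmin : ∀ K : Subgroup P, K.Normal → K ≤ N → K = ⊥ ∨ K = N) (hN : N ≠ ⊥)
    (hi : Irr (fun x : N => ρ x)) (hf : ∀ x, Scal (ρ x) → x = 1) (g : P)
    (hg : LinearMap.trace ℂ V (ρ g) ≠ 0) :
    orderOf g * Module.finrank ℂ V ∣ Nat.card P := by
  by_cases hgen : N ⊔ Subgroup.zpowers g = ⊤
  swap
  · have hgm : g ∈ N ⊔ Subgroup.zpowers g := le_sup_right (a := N) (Subgroup.mem_zpowers g)
    have := ih (N ⊔ Subgroup.zpowers g : Subgroup P) (card_lt_of_ne_top _ hgen) V _ (h.restrict _)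
      (hi.of_le fun W hW x w hw => hW ⟨x, le_sup_left (a := N) x.2⟩ w hw) ⟨g, hgm⟩ hg
    rw [Subgroup.orderOf_mk] at this
    exact this.trans (Subgroup.card_subgroup_dvd_card _)
  rcases hmin ⁅N, N⁆ inferInstance (Subgroup.commutator_le_right _ _) with h1 | h1
  · refine abelian_case ih h N hmin hN hi hf g hgen fun x hx y hy => ?_
    have : ⁅x, y⁆ ∈ ⁅N, N⁆ := Subgroup.commutator_mem_commutator hx hy
    rw [h1, Subgroup.mem_bot] at this
    exact commutatorElement_eq_one_iff_mul_comm.1 this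
  by_cases hs : ∀ K : Subgroup P, K ≤ N → N ≤ Subgroup.normalizer (K : Set P) → K = ⊥ ∨ K = N
  · refine simple_case C h N ?_ hi hf g hg hgen h1.ge
    haveI : Nontrivial N := (Subgroup.nontrivial_iff_ne_bot N).2 hN
    refine ⟨fun K hK => ?_⟩
    have hKn : N ≤ Subgroup.normalizer (K.map N.subtype : Set P) := by
      intro n hn
      rw [Subgroup.mem_normalizer_iff]
      have key : ∀ n : N, ∀ x ∈ K.map N.subtype, (n : P) * x * (n : P)⁻¹ ∈ K.map N.subtype := by
        rintro n _ ⟨y, hy, rfl⟩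
        exact ⟨n * y * n⁻¹, hK.conj_mem y hy n, rfl⟩
      intro x
      refine ⟨key ⟨n, hn⟩ x, fun hx => ?_⟩
      have := key ⟨n, hn⟩⁻¹ _ hx
      convert this using 1
      simp [mul_assoc]
    rcases hs (K.map N.subtype) (Subgroup.map_subtype_le K) hKn with h2 | h2
    · left
      exact (Subgroup.map_eq_bot_iff_of_injective K N.subtype_injective).1 h2
    · right
      rw [eq_top_iff]
      intro x _
      have : (x : P) ∈ K.map N.subtype := by rw [h2]; exact x.2
      obtain ⟨y, hy, e⟩ := this
      rwa [← Subtype.ext (a1 := y) e]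
  · push Not at hs
    obtain ⟨K, hK1, hK2, hK3, hK4⟩ := hs
    obtain ⟨S, hS, hSm⟩ := exists_minimal_le_of_wellFoundedLT
      (fun S : Subgroup P => S ≠ ⊥ ∧ S ≤ N ∧ N ≤ Subgroup.normalizer (S : Set P)) K ⟨hK3, hK1, hK2⟩
    refine nonab_case ih h N hmin hi hf g hg hgen h1.ge S hSm.1.1 hSm.1.2.1 hSm.1.2.2 ?_ ?_
    · intro T hT hTn
      by_cases hT0 : T = ⊥
      · exact Or.inl hT0
      · exact Or.inr (le_antisymm hT (hSm.2 ⟨hT0, hT.trans hSm.1.2.1, hTn⟩ hT))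
    · rintro rfl
      exact hK4 (le_antisymm hK1 hS)

theorem W_step (C : Conjecture24) [Finite P] [FiniteDimensional ℂ V] (ih : WIH (Nat.card P)) (h : PR ρ)
    (hi : Irr ρ) (g : P) (hg : LinearMap.trace ℂ V (ρ g) ≠ 0) :
    orderOf g * Module.finrank ℂ V ∣ Nat.card P := by
  haveI := hi.1
  by_cases hk : h.ker = ⊥
  swap
  · haveI := h.ker_normal
    have h1 := ih.quot h hi h.ker (fun k hk => hk) (card_quot_lt _ hk) g hg
    have h2 := Nat.mul_dvd_mul_right h1 (Nat.card h.ker)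
    rw [← Subgroup.card_eq_card_quotient_mul_card_subgroup] at h2
    refine dvd_trans ?_ h2
    rw [mul_right_comm]
    exact Nat.mul_dvd_mul_right (orderOf_quot_dvd _ g) _
  have hf : ∀ x, Scal (ρ x) → x = 1 := by
    intro x hx
    have : x ∈ h.ker := hx
    rwa [hk, Subgroup.mem_bot] at this
  by_cases hP : Subsingleton P
  · have : Module.finrank ℂ V = 1 := hi.finrank_one fun x => by
      rw [Subsingleton.elim x 1]
      obtain ⟨c, _, e⟩ := h.one
      exact ⟨c, e⟩
    rw [this, Subsingleton.elim g 1, orderOf_one]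
    simp
  rw [not_subsingleton_iff_nontrivial] at hP
  obtain ⟨N, -, hNm⟩ := exists_minimal_le_of_wellFoundedLT
    (fun S : Subgroup P => S ≠ ⊥ ∧ S.Normal) ⊤ ⟨top_ne_bot, inferInstance⟩
  haveI hNn : N.Normal := hNm.1.2
  have hmin : ∀ K : Subgroup P, K.Normal → K ≤ N → K = ⊥ ∨ K = N := by
    intro K hK hKN
    by_cases h0 : K = ⊥
    · exact Or.inl h0
    · exact Or.inr (le_antisymm hKN (hNm.2 ⟨h0, hK⟩ hKN))
  rcases clifford ih h hi N g hg with h1 | ⟨n, hn, ⟨φ⟩⟩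
  · exact h1
  obtain ⟨D⟩ := Dec.exists h hn φ
  haveI := D.ntW
  haveI : Nontrivial (Fin D.n → ℂ) := D.nontriv
  have hτ := D.PRτ h
  have hσ := D.PRσ h
  have hiτ : Irr D.τ := by
    have := D.irrτ Set.univ (hi.of_le fun W hW x w hw => hW ⟨x, trivial⟩ w hw)
    exact this.of_le fun W hW x w hw => hW x w hw
  have hiσ := D.irrσ h
  have htr := D.trace_eq g
  rw [htr] at hg
  have hgσ := left_ne_zero_of_mul hg
  have hgτ := right_ne_zero_of_mul hg
  haveI := hτ.ker_normal
  have hNM : N ≤ hτ.ker := fun x hx => D.tau_scal_N h hx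
  by_cases hH : hτ.ker ⊔ Subgroup.zpowers g = ⊤
  · -- here the second factor is one-dimensional
    have hsc : ∀ x, Scal (D.τ x) := by
      have hgs : Scal (D.τ g) := by
        refine hiτ.schur fun x => ?_
        have : (⊤ : Subgroup P) ≤ hτ.comm (D.τ g) := by
          rw [← hH]
          refine sup_le (fun y hy => ?_) ?_
          · exact Scal.commute (hτ.mem_ker.1 hy) _
          · rw [Subgroup.zpowers_le]; exact rfl
        exact this (Subgroup.mem_top x)
      have : (⊤ : Subgroup P) ≤ hτ.ker := by
        rw [← hH]
        refine sup_le le_rfl ?_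
        rw [Subgroup.zpowers_le]
        exact hgs
      exact fun x => this (Subgroup.mem_top x)
    have h1 := hiτ.finrank_one hsc
    rw [D.dim_eq, h1, mul_one]
    exact claimB C ih hσ N hmin hNm.1.1 hiσ (fun x hx => hf x (D.scal hx (hsc x))) g hgσ
  · have hgm : g ∈ hτ.ker ⊔ Subgroup.zpowers g := le_sup_right (a := hτ.ker) (Subgroup.mem_zpowers g)
    have h1 := ih (hτ.ker ⊔ Subgroup.zpowers g : Subgroup P) (card_lt_of_ne_top _ hH) (Fin D.n → ℂ) _
      (hσ.restrict _)
      (hiσ.of_le fun W hW x w hw => hW ⟨x, le_sup_left (a := hτ.ker) (hNM x.2)⟩ w hw) ⟨g, hgm⟩ hgσ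
    rw [Subgroup.orderOf_mk, card_sup] at h1
    have h2 := ih.quot hτ hiτ hτ.ker (fun k hk => hk)
      (card_quot_lt _ fun h0 => hNm.1.1 (le_bot_iff.1 (h0 ▸ hNM))) g hgτ
    have h3 := mul_dvd_mul h1 h2
    have ho : 0 < orderOf (QuotientGroup.mk g : P ⧸ hτ.ker) := orderOf_pos _
    rw [D.dim_eq, Subgroup.card_eq_card_quotient_mul_card_subgroup hτ.ker]
    refine Nat.dvd_of_mul_dvd_mul_right ho ?_
    have e1 : orderOf g * (Module.finrank ℂ (Fin D.n → ℂ) * Module.finrank ℂ D.W) *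
        orderOf (QuotientGroup.mk g : P ⧸ hτ.ker) =
        orderOf g * Module.finrank ℂ (Fin D.n → ℂ) *
        (orderOf (QuotientGroup.mk g : P ⧸ hτ.ker) * Module.finrank ℂ D.W) := by ac_rfl
    have e2 : Nat.card (P ⧸ hτ.ker) * Nat.card hτ.ker * orderOf (QuotientGroup.mk g : P ⧸ hτ.ker) =
        Nat.card hτ.ker * orderOf (QuotientGroup.mk g : P ⧸ hτ.ker) * Nat.card (P ⧸ hτ.ker) := by ac_rfl
    rw [e1, e2]
    exact h3

theorem W_all (C : Conjecture24) (n : ℕ) : WIH n := by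
  induction n with
  | zero => intro P _ _ hlt; exact absurd hlt (Nat.not_lt_zero _)
  | succ n ih =>
    intro P _ _ hlt V _ _ _ ρ h hi g hg
    have : WIH (Nat.card P) := fun Q _ _ hQ => ih Q (by omega)
    exact W_step C this h hi g hg

theorem c24_c21 (C : Conjecture24) : Conjecture21 := by
  intro G _ _ _ V hV _ _ g hg _
  have hi := irr_of_simple V hV
  have h : PR (fun x => V.ρ x : G → Module.End ℂ V) :=
    ⟨⟨1, one_ne_zero, by simp⟩, fun x y => ⟨1, one_ne_zero, by simp⟩⟩
  have hK : ∀ k ∈ Subgroup.center G, Scal (V.ρ k : Module.End ℂ V) := fun k hk =>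
    hi.schur fun x => by
      rw [← map_mul, ← map_mul, Subgroup.mem_center_iff.1 hk x]
  exact (W_all C (Nat.card (G ⧸ Subgroup.center G) + 1)).quot h hi (Subgroup.center G) hK
    (Nat.lt_succ_self _) g hg
end mainW

open scoped Pointwise commutatorElement
section converse

theorem comm_scal {G V : Type} [Group G] [Finite G] [AddCommGroup V] [Module ℂ V]
    [FiniteDimensional ℂ V] (R : G →* Module.End ℂ V) (hi : Irr (fun x => R x)) (L : Subgroup G) [hL : L.Normal]
    (h : G) (hgen : L ⊔ Subgroup.zpowers h = ⊤) (htr : LinearMap.trace ℂ V (R h) ≠ 0)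
    (a : Module.End ℂ V) (ha : ∀ x ∈ L, R x * a = a * R x) : Scal a := by
  have hu : R h * R h⁻¹ = 1 := by rw [← map_mul, mul_inv_cancel, map_one]
  have hu' : R h⁻¹ * R h = 1 := by rw [← map_mul, inv_mul_cancel, map_one]
  have hdec : ∀ x : G, ∃ l ∈ L, ∃ i : ℕ, x = l * h ^ i := by
    intro x
    have : x ∈ L ⊔ Subgroup.zpowers h := by rw [hgen]; trivial
    rw [Subgroup.mem_sup_of_normal_left] at this
    obtain ⟨l, hl, z, hz, rfl⟩ := this
    rw [← mem_powers_iff_mem_zpowers] at hz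
    obtain ⟨i, rfl⟩ := hz
    exact ⟨l, hl, i, rfl⟩
  let T : Module.End ℂ (Module.End ℂ V) := LinearMap.mulLeft ℂ (R h) ∘ₗ LinearMap.mulRight ℂ (R h⁻¹)
  have hT : ∀ b, T b = R h * (b * R h⁻¹) := fun b => rfl
  have hTb : ∀ b, T b * R h = R h * b := fun b => by rw [hT, mul_assoc, mul_assoc, hu', mul_one]
  let A : Submodule ℂ (Module.End ℂ V) :=
    { carrier := {b | ∀ x ∈ L, R x * b = b * R x}
      add_mem' := fun hb hc x hx => by rw [mul_add, add_mul, hb x hx, hc x hx]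
      zero_mem' := fun x hx => by simp
      smul_mem' := fun c b hb x hx => by rw [mul_smul_comm, smul_mul_assoc, hb x hx] }
  have hTA : ∀ b ∈ A, T b ∈ A := by
    intro b hb x hx
    have h1 := hb (h⁻¹ * x * h) (by simpa using hL.conj_mem x hx h⁻¹)
    have e1 : R x * R h = R h * R (h⁻¹ * x * h) := by rw [← map_mul, ← map_mul]; congr 1; group
    have e2 : R (h⁻¹ * x * h) * R h⁻¹ = R h⁻¹ * R x := by rw [← map_mul, ← map_mul]; congr 1; group
    rw [hT, ← mul_assoc, e1, mul_assoc, ← mul_assoc (R (h⁻¹ * x * h)), h1, mul_assoc, e2]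
    simp only [mul_assoc]
  have hTpow : ∀ (n : ℕ) b, (T ^ n) b = R (h ^ n) * (b * R (h ^ n)⁻¹) := by
    intro n
    induction n with
    | zero => intro b; simp
    | succ n ih =>
      intro b
      rw [pow_succ, Module.End.mul_apply, ih, hT, pow_succ, mul_inv_rev, map_mul, map_mul]
      simp only [mul_assoc]
  have hTfin : ∀ b, (T ^ orderOf h) b = b := fun b => by
    rw [hTpow, pow_orderOf_eq_one]; simp
  have key : ∀ b ∈ A, ∀ ζ : ℂ, b ≠ 0 → T b = ζ • b → ζ = 1 := by
    intro b hb ζ hb0 hζ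
    have e1 : R h * b = ζ • (b * R h) := by rw [← hTb, hζ, smul_mul_assoc]
    have hζ0 : ζ ≠ 0 := by
      rintro rfl
      apply hb0
      rw [zero_smul] at e1
      calc b = (R h⁻¹ * R h) * b := by rw [hu', one_mul]
        _ = 0 := by rw [mul_assoc, e1, mul_zero]
    have hker : LinearMap.ker b = ⊥ := by
      rcases hi.2 (LinearMap.ker b) (fun x w hw => by
        obtain ⟨l, hl, i, rfl⟩ := hdec x
        have hstep : ∀ w ∈ LinearMap.ker b, R h w ∈ LinearMap.ker b := by
          intro w hw
          rw [LinearMap.mem_ker] at hw ⊢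
          have := LinearMap.congr_fun e1 w
          simp only [Module.End.mul_apply, LinearMap.smul_apply, hw, map_zero] at this
          exact (smul_eq_zero.1 this.symm).resolve_left hζ0
        have hpow : ∀ i : ℕ, R (h ^ i) w ∈ LinearMap.ker b := by
          intro i
          induction i with
          | zero => simpa using hw
          | succ i ih => rw [pow_succ', map_mul, Module.End.mul_apply]; exact hstep _ ih
        have h2 := LinearMap.congr_fun (hb l hl) (R (h ^ i) w)
        have h3 := hpow i
        rw [LinearMap.mem_ker] at h3
        rw [Module.End.mul_apply, Module.End.mul_apply, h3, map_zero] at h2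
        show b (R (l * h ^ i) w) = 0
        rw [map_mul, Module.End.mul_apply]
        exact h2.symm) with h1 | h1
      · exact h1
      · exact absurd (LinearMap.ker_eq_top.1 h1) hb0
    have hbu : IsUnit b := (LinearMap.isUnit_iff_ker_eq_bot b).2 hker
    obtain ⟨v, rfl⟩ := hbu
    have e2 : R h = ζ • ((v : Module.End ℂ V) * (R h * ↑v⁻¹)) := by
      calc R h = R h * (v : Module.End ℂ V) * ↑v⁻¹ := by rw [mul_assoc, Units.mul_inv, mul_one]
        _ = _ := by rw [e1, smul_mul_assoc, mul_assoc]
    have e3 := congrArg (LinearMap.trace ℂ V) e2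
    rw [map_smul, LinearMap.trace_mul_comm, mul_assoc, Units.inv_mul, mul_one, smul_eq_mul] at e3
    exact (mul_right_cancel₀ htr ((one_mul _).trans e3)).symm
  have hTid : ∀ b ∈ A, T b = b := by
    let B := A.map (T - 1)
    have hBA : B ≤ A := by
      rintro _ ⟨c, hc, rfl⟩
      exact sub_mem (hTA c hc) hc
    have hTB : ∀ b ∈ B, T b ∈ B := by
      rintro _ ⟨c, hc, rfl⟩
      refine ⟨T c, hTA c hc, ?_⟩
      simp
    by_cases hB : B = ⊥
    · intro b hb
      have : (T - 1) b ∈ B := Submodule.mem_map_of_mem hb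
      rw [hB, Submodule.mem_bot] at this
      exact sub_eq_zero.1 this
    · exfalso
      haveI : Nontrivial B := Submodule.nontrivial_iff_ne_bot.2 hB
      obtain ⟨ζ, hζ⟩ := Module.End.exists_eigenvalue (T.restrict hTB)
      obtain ⟨⟨b, hb⟩, hbe⟩ := hζ.exists_hasEigenvector
      have hb0 : b ≠ 0 := fun h0 => hbe.2 (Subtype.ext h0)
      have hTe : T b = ζ • b := congrArg Subtype.val hbe.apply_eq_smul
      have h1 := key b (hBA hb) ζ hb0 hTe
      rw [h1, one_smul] at hTe
      obtain ⟨c, hc, hcb⟩ := hb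
      have hTc : T c = c + b := by
        rw [← hcb]; simp
      have hind : ∀ n : ℕ, (T ^ n) c = c + (n : ℂ) • b := by
        intro n
        induction n with
        | zero => simp
        | succ n ih =>
          rw [pow_succ', Module.End.mul_apply, ih, map_add, map_smul, hTe, hTc]
          push_cast
          rw [add_smul, one_smul]; abel
      have h2 := hind (orderOf h)
      rw [hTfin] at h2
      have h3 : (orderOf h : ℂ) • b = 0 := by
        have := h2.symm
        rwa [add_eq_left] at this
      rcases smul_eq_zero.1 h3 with h4 | h4
      · exact (orderOf_pos h).ne' (by exact_mod_cast h4)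
      · exact hb0 h4
  have hah : R h * a = a * R h := by rw [← hTb, hTid a ha]
  refine hi.schur fun x => ?_
  obtain ⟨l, hl, i, rfl⟩ := hdec x
  have hp : ∀ i : ℕ, R (h ^ i) * a = a * R (h ^ i) := fun i => by
    rw [map_pow]; exact (Commute.pow_left hah i)
  show R (l * h ^ i) * a = a * R (l * h ^ i)
  rw [map_mul, mul_assoc, hp, ← mul_assoc, ha l hl, mul_assoc]

theorem residual_eq {H : Type} [Group H] (hp : commutator ↥(commutator H) = ⊤) :
    commutator H ≤ ⁅commutator H, commutator H⁆ ∧ solvableResidual H = commutator H := by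
  have h1 : commutator H ≤ ⁅commutator H, commutator H⁆ := by
    have := Subgroup.map_subtype_commutator (commutator H)
    rw [hp, ← MonoidHom.range_eq_map, Subgroup.range_subtype] at this
    exact this.le
  refine ⟨h1, le_antisymm ?_ (le_iInf fun n => ?_)⟩
  · refine (iInf_le _ 1).trans ?_
    rw [derivedSeries_one]
  · induction n with
    | zero => rw [derivedSeries_zero]; exact le_top
    | succ n ih =>
      rw [derivedSeries_succ]
      exact h1.trans (Subgroup.commutator_mono ih ih)

theorem c21_c24 (C : Conjecture21) : Conjecture24 := by
  intro H _ _ hq hZ V hV hinj h hh hgen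
  obtain ⟨hp, hsimp⟩ := hq
  obtain ⟨hperf, hres⟩ := residual_eq hp
  have hi := irr_of_simple V hV
  haveI := hi.1
  have hcs := comm_scal (V := V) V.ρ hi (commutator H) h hgen hh
  have hscal : ∀ x : H, Scal (V.ρ x : Module.End ℂ V) → x ∈ Subgroup.center H := by
    intro x hx
    rw [Subgroup.mem_center_iff]
    intro y
    apply hinj
    rw [map_mul, map_mul]
    exact (hx.commute _).symm
  have hPR : PR (fun x => V.ρ x : H → Module.End ℂ V) :=
    ⟨⟨1, one_ne_zero, by simp⟩, fun x y => ⟨1, one_ne_zero, by simp⟩⟩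
  have hK : ∀ k ∈ Subgroup.center H, Scal (V.ρ k : Module.End ℂ V) := fun k hk =>
    hi.schur fun x => by
      rw [← map_mul, ← map_mul, Subgroup.mem_center_iff.1 hk x]
  let mk := QuotientGroup.mk' (Subgroup.center H)
  let S : Subgroup (H ⧸ Subgroup.center H) := (commutator H).map mk
  have hSp : S ≤ ⁅S, S⁆ := by
    rw [← Subgroup.map_commutator]
    exact Subgroup.map_mono hperf
  let f : commutator H →* S := (mk.comp (commutator H).subtype).codRestrict S
    fun x => Subgroup.mem_map_of_mem mk x.2
  have hf : Function.Surjective f := by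
    rintro ⟨_, y, hy, rfl⟩
    exact ⟨⟨y, hy⟩, rfl⟩
  have hk : f.ker = Subgroup.center (commutator H) := by
    ext x
    rw [MonoidHom.mem_ker, Subtype.ext_iff]
    show (QuotientGroup.mk (x : H) : H ⧸ Subgroup.center H) = 1 ↔ _
    rw [QuotientGroup.eq_one_iff, ← hZ]
    constructor
    · rintro ⟨y, hy, e⟩
      rwa [← Subtype.ext (a1 := y) e]
    · intro hx
      exact ⟨x, hx, rfl⟩
  have hSs : IsSimpleGroup S := ((QuotientGroup.quotientMulEquivOfEq hk).symm.trans
        (QuotientGroup.quotientKerEquivOfSurjective f hf)).symm.isSimpleGroup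
  refine C H ⟨S, ?_, hSs, ?_, ?_⟩ V hV hinj ?_ h hh ?_
  · exact Subgroup.Normal.map inferInstance mk (QuotientGroup.mk'_surjective _)
  · by_contra hab
    push Not at hab
    have h1 : S = ⊥ := by
      rw [eq_bot_iff]
      refine hSp.trans (Subgroup.commutator_le.2 fun x hx y hy => ?_)
      rw [Subgroup.mem_bot, commutatorElement_eq_one_iff_mul_comm]
      exact congrArg Subtype.val (hab ⟨x, hx⟩ ⟨y, hy⟩)
    exact (Subgroup.nontrivial_iff_ne_bot S).1 hSs.toNontrivial h1
  · rw [eq_bot_iff]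
    intro q hq
    obtain ⟨x, rfl⟩ := QuotientGroup.mk_surjective q
    rw [Subgroup.mem_bot, QuotientGroup.eq_one_iff]
    refine hscal x (hcs _ fun l hl => ?_)
    have h1 := perfcomm (hPR.quot _ hK) hSp (x := QuotientGroup.mk x)
      (fun y hy => (Subgroup.mem_centralizer_iff.1 hq y hy).symm) (QuotientGroup.mk l)
      (Subgroup.mem_map_of_mem mk hl)
    obtain ⟨c, hc, e⟩ := hPR.quot_eq _ hK x
    obtain ⟨d, hd, e'⟩ := hPR.quot_eq _ hK l
    rw [e, e', smul_mul_smul_comm, smul_mul_smul_comm, mul_comm c d] at h1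
    exact smul_right_injective _ (mul_ne_zero hd hc) h1
  · refine simple_of_comm (V := V) _ fun a ha => hcs a fun x hx => ?_
    exact ha ⟨x, by rw [hres]; exact hx⟩
  · rw [hres, eq_top_iff, ← hgen]
    exact sup_le_sup_right le_sup_left _
end converse

/-- **Lemma 2.5'.** Conjecture 2.1 and Conjecture 2.4 are equivalent. -/
theorem conjecture21_iff_conjecture24 : Conjecture21 ↔ Conjecture24 := by
  exact ⟨c21_c24, c24_c21⟩
end

section
/- Let G and H be finite groups with G/Z(G) ≅ H/Z(H), and let L be a group together with injective homomorphisms ι_G : L → G and ι_H : L → H whose images are the solvable residuals G^(∞) of G and H^(∞) of H respectively. Let χ be a faithful irreducible complex character of G and ψ a faithful irreducible complex character of H such that the restrictions agree, χ(ι_G(x)) = ψ(ι_H(x)) for all x ∈ L, and this common restriction is an irreducible character of L. Let g ∈ G and h ∈ H be such that G = ⟨ι_G(L), Z(G), g⟩, H = ⟨ι_H(L), Z(H), h⟩, χ(g) ≠ 0, ψ(h) ≠ 0, and conjugation by g and by h induce the same automorphism of L (i.e. there is an automorphism α of L with ι_G(α(x)) = g·ι_G(x)·g⁻¹ and ι_H(α(x))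 = h·ι_H(x)·h⁻¹ for all x ∈ L). If o(gZ(G))·χ(1) divides |G : Z(G)|, then o(hZ(H))·ψ(1) divides |H : Z(H)|. -/
theorem orderOf_mk_eq_orderOf_aut {G L : Type} [Group G] [Group L] (i : L →* G)
    (hinj : Function.Injective i) (g : G)
    (hgen : i.range ⊔ Subgroup.center G ⊔ Subgroup.zpowers g = ⊤)
    (α : MulAut L) (hα : ∀ x : L, i (α x) = g * i x * g⁻¹) :
    orderOf (QuotientGroup.mk g : G ⧸ Subgroup.center G) = orderOf α := by
  have hpow : ∀ (n : ℕ) (x : L), i ((α ^ n) x) = g ^ n * i x * (g ^ n)⁻¹ := by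
    intro n
    induction n with
    | zero => intro x; simp
    | succ k ih =>
      intro x
      rw [pow_succ, MulAut.mul_apply, ih, hα, pow_succ, mul_inv_rev]
      simp only [mul_assoc]
  rw [orderOf_eq_orderOf_iff]
  intro n
  rw [← QuotientGroup.mk_pow, QuotientGroup.eq_one_iff]
  constructor
  · intro hc
    ext x
    apply hinj
    rw [hpow, ← Subgroup.mem_center_iff.1 hc (i x)]
    simp
  · intro h1
    have hle : (⊤ : Subgroup G) ≤ Subgroup.centralizer {g ^ n} := by
      rw [← hgen]
      refine sup_le (sup_le ?_ (Subgroup.center_le_centralizer _)) ?_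
      · rintro _ ⟨x, rfl⟩
        rw [Subgroup.mem_centralizer_singleton_iff]
        have h2 := hpow n x
        rw [h1, MulAut.one_apply, eq_mul_inv_iff_mul_eq] at h2
        exact h2
      · rw [Subgroup.zpowers_le, Subgroup.mem_centralizer_singleton_iff]
        exact (Commute.refl g).pow_right n
    rw [Subgroup.mem_center_iff]
    intro y
    exact Subgroup.mem_centralizer_singleton_iff.1 (hle (Subgroup.mem_top y))

/-- **Lemma 2.5.** Let `G`, `H` be finite groups with `G/Z(G) ≅ H/Z(H)`, and
let `L` be a group with injective homomorphisms `ιG : L → G`, `ιH : L → H` whose images are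
`G^(∞)` and `H^(∞)`. Let `χ` (afforded by `V`) and `ψ` (afforded by `W`) be faithful
irreducible complex characters of `G` and `H` whose restrictions along `ιG`, `ιH` agree and
are an irreducible character of `L`. Let `g ∈ G`, `h ∈ H` with `G = ⟨ιG(L), Z(G), g⟩`,
`H = ⟨ιH(L), Z(H), h⟩`, `χ(g) ≠ 0`, `ψ(h) ≠ 0`, and such that conjugation by `g` and by `h`
induce the same automorphism of `L`. If `o(gZ(G))·χ(1) ∣ |G : Z(G)|`, then
`o(hZ(H))·ψ(1) ∣ |H : Z(H)|`. -/
theorem conjecture21_transfer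
    (G H L : Type) [Group G] [Group H] [Group L] [Finite G] [Finite H]
    (e : Nonempty ((G ⧸ Subgroup.center G) ≃* (H ⧸ Subgroup.center H)))
    (ιG : L →* G) (ιH : L →* H)
    (hinjG : Function.Injective ιG) (hinjH : Function.Injective ιH)
    (hrG : ιG.range = solvableResidual G) (hrH : ιH.range = solvableResidual H)
    (V : FDRep ℂ G) (hVsimple : CategoryTheory.Simple V)
    (hVfaith : Function.Injective V.ρ)
    (W : FDRep ℂ H) (hWsimple : CategoryTheory.Simple W)
    (hWfaith : Function.Injective W.ρ)
    (hres : ∀ x : L, V.character (ιG x) = W.character (ιH x))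
    (hresirr : ∃ U : FDRep ℂ L, CategoryTheory.Simple U ∧
      ∀ x : L, U.character x = V.character (ιG x))
    (g : G) (h : H)
    (hgenG : ιG.range ⊔ Subgroup.center G ⊔ Subgroup.zpowers g = ⊤)
    (hgenH : ιH.range ⊔ Subgroup.center H ⊔ Subgroup.zpowers h = ⊤)
    (hgne : V.character g ≠ 0) (hhne : W.character h ≠ 0)
    (hsameaut : ∃ α : MulAut L, ∀ x : L,
      ιG (α x) = g * ιG x * g⁻¹ ∧ ιH (α x) = h * ιH x * h⁻¹)
    (hdvd : orderOf (QuotientGroup.mk g : G ⧸ Subgroup.center G) * Module.finrank ℂ V ∣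
      (Subgroup.center G).index) :
    orderOf (QuotientGroup.mk h : H ⧸ Subgroup.center H) * Module.finrank ℂ W ∣
      (Subgroup.center H).index := by
  obtain ⟨α, hα⟩ := hsameaut
  obtain ⟨e⟩ := e
  have h1 := orderOf_mk_eq_orderOf_aut ιG hinjG g hgenG α (fun x => (hα x).1)
  have h2 := orderOf_mk_eq_orderOf_aut ιH hinjH h hgenH α (fun x => (hα x).2)
  have h3 : Module.finrank ℂ V = Module.finrank ℂ W := by
    have := hres 1
    rw [map_one, map_one, FDRep.char_one, FDRep.char_one] at this
    exact_mod_cast this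
  have h4 : (Subgroup.center G).index = (Subgroup.center H).index :=
    Nat.card_congr e.toEquiv
  rw [h2, ← h1, ← h3, ← h4]
  exact hdvd
end

section
/- Let k be a field, V a finite-dimensional k-vector space, h : V → V a linear endomorphism, and n ≥ 1 an integer. Let T be the linear endomorphism of the n-fold tensor power V ⊗ V ⊗ ⋯ ⊗ V (n factors) determined on simple tensors by T(v₁ ⊗ v₂ ⊗ ⋯ ⊗ v_n) = h(v_n) ⊗ v₁ ⊗ v₂ ⊗ ⋯ ⊗ v_{n-1}. Then the trace of T equals the trace of h. -/
open scoped TensorProduct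

/-- Let `V` be a finite-dimensional vector space over a field `k`,
`f : V → V` linear, and `n ≥ 1`. If `T` is the endomorphism of the `n`-fold tensor power
`V^{⊗n}` determined on simple tensors by
`T(v₁ ⊗ v₂ ⊗ ⋯ ⊗ vₙ) = f(vₙ) ⊗ v₁ ⊗ v₂ ⊗ ⋯ ⊗ v_{n-1}`, then `trace T = trace f`.
(In `Fin n` indexing, the output entry at `i = 0` is `f (v (i - 1)) = f (v (n-1))`,
and at `i ≠ 0` it is `v (i - 1)`, where subtraction is the cyclic subtraction of `Fin n`.) -/
theorem trace_twisted_cyclic_shift_tensorPower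
    (k : Type*) [Field k] (V : Type*) [AddCommGroup V] [Module k V]
    [FiniteDimensional k V] (n : ℕ) [NeZero n] (f : V →ₗ[k] V)
    (T : ⨂[k]^n V →ₗ[k] ⨂[k]^n V)
    (hT : ∀ v : Fin n → V,
      T (PiTensorProduct.tprod k v) =
        PiTensorProduct.tprod k fun i => if i = 0 then f (v (i - 1)) else v (i - 1)) :
    LinearMap.trace k (⨂[k]^n V) T = LinearMap.trace k V f := by
  classical
  obtain ⟨m, rfl⟩ : ∃ m, n = m + 1 := Nat.exists_eq_succ_of_ne_zero (NeZero.ne n)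
  let b := Module.finBasis k V
  let B := Basis.piTensorProduct (fun _ : Fin (m + 1) => b)
  have e : LinearMap.trace k (⨂[k]^(m + 1) V) T = ∑ p, B.repr (T (B p)) p := by
    rw [LinearMap.trace_eq_matrix_trace k B]
    simp [Matrix.trace, LinearMap.toMatrix_apply]
  rw [e, LinearMap.trace_eq_matrix_trace k b]
  simp only [Matrix.trace, Matrix.diag_apply, LinearMap.toMatrix_apply]
  have key : ∀ p, B.repr (T (B p)) p = ∏ i : Fin (m + 1),
      b.repr (if i = 0 then f (b (p (i - 1))) else b (p (i - 1))) (p i) := by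
    intro p
    have h1 : B p = PiTensorProduct.tprod k (fun i => b (p i)) :=
      Basis.piTensorProduct_apply _ p
    rw [h1, hT]
    exact Basis.piTensorProduct_repr_tprod_apply _ _ _
  symm
  refine Finset.sum_of_injOn (fun c _ => c) ?_ ?_ ?_ ?_
  · intro c _ d _ h
    exact congrFun h 0
  · intro c _
    simp
  · intro p _ hp
    rw [key]
    by_contra hne
    apply hp
    refine ⟨p 0, by simp, ?_⟩
    funext i
    symm
    show p i = p 0
    induction i using Fin.induction with
    | zero => rfl
    | succ i ih =>
      rw [← ih]
      have h := Finset.prod_ne_zero_iff.mp hne i.succ (Finset.mem_univ _)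
      have h2 : i.succ - 1 = i.castSucc := by
        rw [sub_eq_iff_eq_add, Fin.coeSucc_eq_succ]
      rw [if_neg (Fin.succ_ne_zero i), h2, Module.Basis.repr_self, Finsupp.single_apply] at h
      by_contra hc
      exact h (if_neg fun h => hc h.symm)
  · intro c _
    rw [key, Fin.prod_univ_succ]
    simp [Fin.succ_ne_zero]
end

section
/- Let G be a finite group, L ⊴ G a normal subgroup, and h ∈ G an element with G = ⟨L, h⟩ (so G/L is cyclic, generated by the image of h). If χ is an irreducible complex character of G with χ(h) ≠ 0, then the restriction χ|_L is an irreducible character of L. -/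
theorem all_of_gen {G : Type} [Group G] (L : Subgroup G) (h : G)
    (hgen : L ⊔ Subgroup.zpowers h = ⊤) (S : Subgroup G) (hL : ∀ l ∈ L, l ∈ S) (hh : h ∈ S)
    (g : G) : g ∈ S := by
  have : (⊤ : Subgroup G) ≤ S := by
    rw [← hgen]
    exact sup_le hL (by simpa using hh)
  exact this trivial

theorem core_comm {G : Type} [Group G] [Finite G] (L : Subgroup G) [L.Normal]
    (h : G) (hgen : L ⊔ Subgroup.zpowers h = ⊤)
    {V : Type} [AddCommGroup V] [Module ℂ V] [FiniteDimensional ℂ V]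
    (ρ : Representation ℂ G V)
    (irr : ∀ W : Submodule ℂ V, (∀ g, ∀ w ∈ W, ρ g w ∈ W) → W = ⊥ ∨ W = ⊤)
    (hne : LinearMap.trace ℂ V (ρ h) ≠ 0)
    (T : Module.End ℂ V) (hT : ∀ l ∈ L, ρ l * T = T * ρ l) :
    ρ h * T * ρ h⁻¹ = T := by
  classical
  let A : Submodule ℂ (Module.End ℂ V) :=
    { carrier := {T | ∀ l ∈ L, ρ l * T = T * ρ l}
      add_mem' := by
        intro a b ha hb l hl
        rw [mul_add, add_mul, ha l hl, hb l hl]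
      zero_mem' := by intro l hl; simp
      smul_mem' := by
        intro c a ha l hl
        rw [mul_smul_comm, smul_mul_assoc, ha l hl] }
  let σ : Module.End ℂ (Module.End ℂ V) :=
    LinearMap.mulLeft ℂ (ρ h) * LinearMap.mulRight ℂ (ρ h⁻¹)
  have hinv : ρ h * ρ h⁻¹ = 1 := by rw [← map_mul]; simp
  have hinv' : ρ h⁻¹ * ρ h = 1 := by rw [← map_mul]; simp
  have σa : ∀ T, σ T = ρ h * T * ρ h⁻¹ := by intro T; simp [σ, mul_assoc]
  have hAσ : ∀ S ∈ A, σ S ∈ A := by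
    intro S hS l hl
    have h1 := hS (h⁻¹ * l * h) (by
      simpa using ‹L.Normal›.conj_mem l hl h⁻¹)
    rw [σa]
    have e1 : ρ l = ρ h * ρ (h⁻¹ * l * h) * ρ h⁻¹ := by
      rw [← map_mul, ← map_mul]; congr 1; group
    rw [e1]
    calc _ = ρ h * ρ (h⁻¹ * l * h) * (ρ h⁻¹ * ρ h) * S * ρ h⁻¹ := by simp only [mul_assoc]
      _ = ρ h * (ρ (h⁻¹ * l * h) * S) * ρ h⁻¹ := by rw [hinv']; simp only [mul_assoc, one_mul]
      _ = ρ h * S * (ρ h⁻¹ * ρ h) * ρ (h⁻¹ * l * h) * ρ h⁻¹ := by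
        rw [h1, hinv']; simp only [mul_assoc, one_mul]
      _ = _ := by simp only [mul_assoc]
  obtain ⟨n, hn, hhn⟩ := (isOfFinOrder_iff_pow_eq_one).1 (isOfFinOrder_of_finite h)
  have σpow : ∀ k : ℕ, ∀ S, (σ ^ k) S = ρ (h ^ k) * S * ρ (h ^ k)⁻¹ := by
    intro k
    induction k with
    | zero => intro S; simp
    | succ k ih =>
      intro S
      rw [pow_succ, Module.End.mul_apply, ih, σa, pow_succ, mul_inv_rev, map_mul, map_mul]
      simp only [mul_assoc]
  have σn : σ ^ n = 1 := by
    ext1 S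
    rw [σpow, hhn]; simp
  -- eigenvectors
  have eig : ∀ S ∈ A, S ≠ 0 → ∀ ω : ℂ, σ S = ω • S → ω = 1 := by
    intro S hS hS0 ω hω
    have hc : ρ h * S = ω • (S * ρ h) := by
      rw [σa] at hω
      calc ρ h * S = (ρ h * S * ρ h⁻¹) * ρ h := by rw [mul_assoc _ _ (ρ h), hinv', mul_one]
        _ = _ := by rw [hω, smul_mul_assoc]
    have hω0 : ω ≠ 0 := by
      rintro rfl
      apply hS0
      rw [zero_smul] at hc
      calc S = ρ h⁻¹ * (ρ h * S) := by rw [← mul_assoc, hinv', one_mul]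
        _ = 0 := by rw [hc, mul_zero]
    have hk : ∀ g, ∃ c : ℂ, c ≠ 0 ∧ ρ g * S = c • (S * ρ g) := by
      let P : Subgroup G :=
        { carrier := {g | ∃ c : ℂ, c ≠ 0 ∧ ρ g * S = c • (S * ρ g)}
          one_mem' := ⟨1, one_ne_zero, by simp⟩
          mul_mem' := by
            rintro a b ⟨c, hc, e⟩ ⟨d, hd, f⟩
            refine ⟨c * d, mul_ne_zero hc hd, ?_⟩
            rw [map_mul, mul_assoc, f, mul_smul_comm, ← mul_assoc, e, smul_mul_assoc, smul_smul,
              mul_assoc, mul_comm d c]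
          inv_mem' := by
            rintro a ⟨c, hc, e⟩
            refine ⟨c⁻¹, inv_ne_zero hc, ?_⟩
            have i1 : ρ a * ρ a⁻¹ = 1 := by rw [← map_mul]; simp
            have i2 : ρ a⁻¹ * ρ a = 1 := by rw [← map_mul]; simp
            have : S = c • (ρ a⁻¹ * S * ρ a) := by
              calc S = ρ a⁻¹ * (ρ a * S) := by rw [← mul_assoc, i2, one_mul]
                _ = _ := by rw [e, mul_smul_comm, mul_assoc]
            conv_rhs => rw [this]
            rw [smul_mul_assoc, smul_smul, inv_mul_cancel₀ hc, one_smul, mul_assoc, i1, mul_one] }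
      exact all_of_gen L h hgen P (fun l hl => ⟨1, one_ne_zero, by rw [one_smul]; exact hS l hl⟩)
        ⟨ω, hω0, hc⟩
    have hker : LinearMap.ker S = ⊥ := by
      rcases irr (LinearMap.ker S) (by
        intro g w hw
        obtain ⟨c, hc0, e⟩ := hk g
        have := LinearMap.congr_fun e w
        simp only [Module.End.mul_apply, LinearMap.smul_apply] at this
        rw [LinearMap.mem_ker] at hw ⊢
        rw [hw, map_zero] at this
        exact (smul_eq_zero.1 this.symm).resolve_left hc0) with h1 | h1
      · exact h1
      · exact absurd (LinearMap.ker_eq_top.1 h1) hS0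
    obtain ⟨u, hu⟩ := (LinearMap.isUnit_iff_ker_eq_bot S).2 hker
    have htr : LinearMap.trace ℂ V (ρ h) = ω * LinearMap.trace ℂ V (ρ h) := by
      calc LinearMap.trace ℂ V (ρ h) = LinearMap.trace ℂ V ((ρ h * S) * (↑u⁻¹ : Module.End ℂ V)) := by
            rw [← hu, mul_assoc, Units.mul_inv, mul_one]
        _ = _ := by
          rw [hc, smul_mul_assoc, map_smul, LinearMap.trace_mul_comm, ← mul_assoc, ← hu,
            Units.inv_mul, one_mul, smul_eq_mul]
    exact (mul_right_cancel₀ hne (by rw [one_mul]; exact htr)).symm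
  -- range of σ - 1 on A
  let B : Submodule ℂ (Module.End ℂ V) := A.map (σ - 1)
  have hBA : B ≤ A := by
    rintro _ ⟨S, hS, rfl⟩
    exact A.sub_mem (hAσ S hS) hS
  have hBσ : ∀ S ∈ B, σ S ∈ B := by
    rintro _ ⟨S, hS, rfl⟩
    exact ⟨σ S, hAσ S hS, by simp⟩
  have hB : B = ⊥ := by
    by_contra hB
    have : Nontrivial B := Submodule.nontrivial_iff_ne_bot.2 hB
    obtain ⟨ω, hω⟩ := Module.End.exists_eigenvalue (σ.restrict hBσ)
    obtain ⟨⟨S, hSB⟩, hv⟩ := hω.exists_hasEigenvector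
    have hS0 : S ≠ 0 := fun h0 => hv.2 (Subtype.ext h0)
    have hSe : σ S = ω • S := congrArg Subtype.val hv.apply_eq_smul
    have hω1 := eig S (hBA hSB) hS0 ω hSe
    rw [hω1, one_smul] at hSe
    obtain ⟨R, hR, hRS⟩ := hSB
    have hpS : ∀ k : ℕ, (σ ^ k) S = S := by
      intro k
      induction k with
      | zero => simp
      | succ k ih => rw [pow_succ, Module.End.mul_apply, hSe, ih]
    have h1 : (∑ i ∈ Finset.range n, σ ^ i) S = 0 := by
      rw [← hRS, ← Module.End.mul_apply, geom_sum_mul, σn, sub_self, LinearMap.zero_apply]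
    rw [LinearMap.sum_apply] at h1
    simp only [hpS, Finset.sum_const, Finset.card_range] at h1
    rw [← Nat.cast_smul_eq_nsmul ℂ] at h1
    exact (smul_ne_zero (Nat.cast_ne_zero.2 hn.ne') hS0) h1
  have : (σ - 1) T ∈ B := ⟨T, hT, rfl⟩
  rw [hB, Submodule.mem_bot] at this
  rw [← σa]
  exact sub_eq_zero.1 this

theorem irr_of_simple_s11 {G : Type} [Group G] (V : FDRep ℂ G) (hV : CategoryTheory.Simple V)
    (W : Submodule ℂ V) (hW : ∀ g, ∀ w ∈ W, V.ρ g w ∈ W) : W = ⊥ ∨ W = ⊤ := by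
  let r : Representation ℂ G W := Subrepresentation.toRepresentation (ρ := V.ρ) ⟨W, fun g v => hW g v⟩
  let i : FDRep.of r ⟶ V :=
    ⟨CategoryTheory.InducedCategory.homMk (ModuleCat.ofHom W.subtype), fun g => by
      ext1; rfl⟩
  have hm : CategoryTheory.Mono i :=
    CategoryTheory.ConcreteCategory.mono_of_injective i Subtype.val_injective
  by_cases hi : i = 0
  · left
    rw [Submodule.eq_bot_iff]
    intro w hw
    have : i.hom.hom.hom = 0 := by rw [hi]; rfl
    exact LinearMap.congr_fun this (⟨w, hw⟩ : W)
  · right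
    have : CategoryTheory.IsIso i := (CategoryTheory.Simple.mono_isIso_iff_nonzero i).2 hi
    rw [Submodule.eq_top_iff']
    intro v
    have e : (CategoryTheory.CategoryStruct.comp (CategoryTheory.inv i) i).hom.hom.hom v = v := by
      rw [CategoryTheory.IsIso.inv_hom_id]; rfl
    rw [← e]
    exact ((CategoryTheory.inv i).hom.hom.hom v : W).2


/-- Let `G` be a finite group, `L ⊴ G`, and `h ∈ G` with `G = ⟨L, h⟩`.
If `χ` is an irreducible complex character of `G` with `χ(h) ≠ 0`, then the restriction
`χ|_L` is an irreducible character of `L`. -/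
theorem restriction_simple_of_char_ne_zero
    (G : Type) [Group G] [Finite G] (L : Subgroup G) [L.Normal]
    (h : G) (hgen : L ⊔ Subgroup.zpowers h = ⊤)
    (V : FDRep ℂ G) (hV : CategoryTheory.Simple V)
    (hne : V.character h ≠ 0) :
    CategoryTheory.Simple (FDRep.of (V.ρ.comp L.subtype)) := by

  have hchar : LinearMap.trace ℂ V (V.ρ h) ≠ 0 := hne
  have key := core_comm L h hgen (V := V) V.ρ (irr_of_simple_s11 V hV) hchar
  have hid : CategoryTheory.CategoryStruct.id (FDRep.of (V.ρ.comp L.subtype)) ≠ 0 := by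
    intro h0
    apply hchar
    have h1 : (LinearMap.id : V →ₗ[ℂ] V) = 0 := congrArg (fun f => f.hom.hom.hom) h0
    have h2 : V.ρ h = 0 := by
      rw [← LinearMap.id_comp (V.ρ h), h1, LinearMap.zero_comp]
    rw [h2, map_zero]
  rw [FDRep.simple_iff_end_is_rank_one, finrank_eq_one_iff_of_nonzero' _ hid]
  intro f
  let T : Module.End ℂ V := f.hom.hom.hom
  have hT : ∀ l ∈ L, V.ρ l * T = T * V.ρ l := by
    intro l hl
    exact (congrArg (fun f => f.hom.hom) (f.comm ⟨l, hl⟩)).symm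
  have hh : V.ρ h * T = T * V.ρ h := by
    have k := key T hT
    have hinv' : V.ρ h⁻¹ * V.ρ h = 1 := by rw [← map_mul]; simp
    calc V.ρ h * T = V.ρ h * T * V.ρ h⁻¹ * V.ρ h := by rw [mul_assoc _ _ (V.ρ h), hinv', mul_one]
      _ = _ := by rw [k]
  have hall : ∀ g, V.ρ g * T = T * V.ρ g := by
    let P : Subgroup G :=
      { carrier := {g | V.ρ g * T = T * V.ρ g}
        one_mem' := by simp
        mul_mem' := by
          intro a b ha hb
          simp only [Set.mem_ofPred_eq] at ha hb ⊢
          rw [map_mul, mul_assoc, hb, ← mul_assoc, ha, mul_assoc]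
        inv_mem' := by
          intro a ha
          simp only [Set.mem_ofPred_eq] at ha ⊢
          have i1 : V.ρ a * V.ρ a⁻¹ = 1 := by rw [← map_mul]; simp
          have i2 : V.ρ a⁻¹ * V.ρ a = 1 := by rw [← map_mul]; simp
          calc V.ρ a⁻¹ * T = V.ρ a⁻¹ * (T * V.ρ a) * V.ρ a⁻¹ := by
                rw [mul_assoc, mul_assoc T, i1, mul_one]
            _ = _ := by rw [← ha, ← mul_assoc, i2, one_mul] }
    exact all_of_gen L h hgen P hT hh
  let F : V ⟶ V := ⟨CategoryTheory.InducedCategory.homMk (ModuleCat.ofHom T), fun g => by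
      ext1; ext1; exact LinearMap.congr_fun (hall g).symm _⟩
  have hidV : CategoryTheory.CategoryStruct.id V ≠ 0 := CategoryTheory.id_nonzero V
  obtain ⟨c, hc⟩ := (finrank_eq_one_iff_of_nonzero' _ hidV).1
    (CategoryTheory.finrank_endomorphism_simple_eq_one ℂ V) F
  refine ⟨c, ?_⟩
  have hc' : c • (LinearMap.id : V →ₗ[ℂ] V) = T := congrArg (fun f => f.hom.hom.hom) hc
  apply Action.Hom.ext
  ext1
  ext1
  exact LinearMap.congr_fun hc' _
end
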